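/- arXiv:1212.5042 — 2 statements merged into one kernel-verified Lean document; each statement's English description precedes it below -/
import Mathlib

section
/- Assume t₀ = min 𝕋 and that f satisfies (H∞), (H^rd_loc-Lip) and (H^forw_stab). Let (q,I_𝕋) be the maximal solution of (Δ-CP). If (q,I_𝕋) is not global, then for every compact K ⊆ Ω there exists t ∈ I_𝕋 such that q(t) ∈ Ω\K; equivalently, q does not stay in any compact subset of Ω on its (non-global) interval of definition. -/
/-!
Suppose the maximal solution `q` stays in a compact `K ⊆ Ω` although its interval misses a point
`c` of `T`. By (H∞) the right-hand side is bounded by some `M` along `q` up to `c`, and the mean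
value inequality `mvt_delta` makes `q` an `M`-Lipschitz function on `I ∩ T`. The inequality is
proved for absolutely continuous functions whose Δ-derivative is bounded only almost everywhere:
the exceptional set is covered by an open set of small length, on which absolute continuity
controls the variation, and the rest is an induction along `T`.

Let `b = sup (I ∩ T)`. If `b ∉ I`, the Lipschitz bound and the compactness of `K` give a limit of
`q` at `b` in `K ⊆ Ω`, and adding it extends the solution to `b`. If `b ∈ I`, then `b < c` is not
the maximum of `T` and the solution extends to the right of `b`: when `b` is right-scattered, by
the single step `x ↦ x + μ(b) f(x, b)`, which preserves `Ω`; when `b` is right-dense, by local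
existence (`local_existence`). Each extension contradicts maximality (`no_extension`).

Local existence is a Banach fixed point argument on a real interval `[b, d]`. With
`π(s) = sup {t ∈ T | t ≤ s}` the Δ-integral over `[b, t) ∩ T` is the Lebesgue integral over
`[b, t]` after composition with `π`, so it suffices to solve `Y(t) = x + ∫_b^t f(Y(π s), π s) ds`;
Lebesgue differentiation and the constancy of `π` on gaps give back the Δ-derivative. Δ-a.e.
statements are handled throughout by `ae_delta_iff`: they hold Lebesgue-a.e. on `T` and at every
right-scattered point.
-/

open MeasureTheory Set Filter Classical

noncomputable section
open scoped Classical

/-- The forward jump operator `σ` of a time scale `T`. -/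
def tsSigma (T : Set ℝ) (t : ℝ) : ℝ :=
  if ({s | s ∈ T ∧ t < s}).Nonempty then sInf {s | s ∈ T ∧ t < s} else t

/-- The backward jump operator `ρ` of a time scale `T`. -/
def tsRho (T : Set ℝ) (t : ℝ) : ℝ :=
  if ({s | s ∈ T ∧ s < t}).Nonempty then sSup {s | s ∈ T ∧ s < t} else t

/-- The graininess function `μ(t) = σ(t) - t`. -/
def tsGrain (T : Set ℝ) (t : ℝ) : ℝ := tsSigma T t - t

/-- `t` is a right-scattered point of `T`. -/
def RightScattered (T : Set ℝ) (t : ℝ) : Prop := t < tsSigma T t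

/-- `t` is a right-dense point of `T`. -/
def RightDense (T : Set ℝ) (t : ℝ) : Prop := tsSigma T t = t

/-- `t` is a left-scattered point of `T`. -/
def LeftScattered (T : Set ℝ) (t : ℝ) : Prop := tsRho T t < t

/-- `t` is a left-dense point of `T`. -/
def LeftDense (T : Set ℝ) (t : ℝ) : Prop := tsRho T t = t

/-- `𝕋 \ {sup 𝕋}`: the time scale minus its maximum (if the maximum exists). -/
def tsUpDomain (T : Set ℝ) : Set ℝ := {t | t ∈ T ∧ ¬ IsGreatest T t}

/-- The Lebesgue Δ-measure on the time scale `T`: Lebesgue measure restricted to `T`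
plus `Σ_{r ∈ ℛ} μ(r)·δ_r` over right-scattered points `r`. -/
def deltaMeasure (T : Set ℝ) : Measure ℝ :=
  volume.restrict T +
    Measure.sum (fun r : {t : ℝ // t ∈ T ∧ RightScattered T t} =>
      ENNReal.ofReal (tsGrain T r.1) • Measure.dirac r.1)

/-- Δ-differentiability of `q` at `t`, with Δ-derivative `q'`. -/
def HasDeltaDerivAt {n : ℕ} (T : Set ℝ) (q : ℝ → EuclideanSpace ℝ (Fin n))
    (q' : EuclideanSpace ℝ (Fin n)) (t : ℝ) : Prop :=
  ∀ ε > (0:ℝ), ∃ U ∈ nhds t, ∀ s ∈ U ∩ T,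
    ‖q (tsSigma T t) - q s - (tsSigma T t - s) • q'‖ ≤ ε * |tsSigma T t - s|

/-- Absolute continuity of `q` on `[a,b]_𝕋`. -/
def DeltaAC {n : ℕ} (T : Set ℝ) (a b : ℝ) (q : ℝ → EuclideanSpace ℝ (Fin n)) : Prop :=
  ∀ ε > (0:ℝ), ∃ δ > (0:ℝ), ∀ (m : ℕ) (u v : ℕ → ℝ),
    (∀ k < m, u k ∈ Icc a b ∩ T) → (∀ k < m, v k ∈ Icc a b ∩ T) →
    (∀ k < m, u k ≤ v k) →
    (∀ i < m, ∀ j < m, i ≠ j → Disjoint (Icc (u i) (v i)) (Icc (u j) (v j))) →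
    (∑ k ∈ Finset.range m, (v k - u k)) < δ →
    (∑ k ∈ Finset.range m, ‖q (v k) - q (u k)‖) < ε

/-- `f` is a Δ-Carathéodory function on `Ω × 𝕋\{sup 𝕋}`. -/
def DeltaCaratheodory {n : ℕ} (T : Set ℝ) (Ω : Set (EuclideanSpace ℝ (Fin n)))
    (f : EuclideanSpace ℝ (Fin n) → ℝ → EuclideanSpace ℝ (Fin n)) : Prop :=
  (∀ x ∈ Ω, AEMeasurable (fun t => f x t) ((deltaMeasure T).restrict (tsUpDomain T))) ∧
    ∀ᵐ t ∂((deltaMeasure T).restrict (tsUpDomain T)), ContinuousOn (fun x => f x t) Ω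

/-- Hypothesis (H∞): `f` is locally bounded. -/
def HInfty {n : ℕ} (T : Set ℝ) (Ω : Set (EuclideanSpace ℝ (Fin n)))
    (f : EuclideanSpace ℝ (Fin n) → ℝ → EuclideanSpace ℝ (Fin n)) : Prop :=
  ∀ K : Set (EuclideanSpace ℝ (Fin n)), K ⊆ Ω → IsCompact K →
    ∀ a ∈ T, ∀ b ∈ T, a < b →
      ∃ M : ℝ, 0 ≤ M ∧
        ∀ᵐ t ∂((deltaMeasure T).restrict (Ico a b ∩ T)), ∀ x ∈ K, ‖f x t‖ ≤ M

/-- Hypothesis (H^rd_loc-Lip): local Lipschitz continuity at right-dense points. -/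
def HrdLocLip {n : ℕ} (T : Set ℝ) (Ω : Set (EuclideanSpace ℝ (Fin n)))
    (f : EuclideanSpace ℝ (Fin n) → ℝ → EuclideanSpace ℝ (Fin n)) : Prop :=
  ∀ xb ∈ Ω, ∀ tb ∈ T, ¬ IsGreatest T tb → RightDense T tb →
    ∃ R > (0:ℝ), ∃ δ > (0:ℝ), ∃ L : ℝ, 0 ≤ L ∧
      Metric.closedBall xb R ⊆ Ω ∧ tb + δ ∈ T ∧
      ∀ᵐ t ∂((deltaMeasure T).restrict (Ico tb (tb + δ) ∩ T)),
        ∀ x₁ ∈ Metric.closedBall xb R, ∀ x₂ ∈ Metric.closedBall xb R,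
          ‖f x₁ t - f x₂ t‖ ≤ L * ‖x₁ - x₂‖

/-- Hypothesis (H^ld_loc-Lip): local Lipschitz continuity at left-dense points. -/
def HldLocLip {n : ℕ} (T : Set ℝ) (Ω : Set (EuclideanSpace ℝ (Fin n)))
    (f : EuclideanSpace ℝ (Fin n) → ℝ → EuclideanSpace ℝ (Fin n)) : Prop :=
  ∀ xb ∈ Ω, ∀ tb ∈ T, ¬ IsLeast T tb → LeftDense T tb →
    ∃ R > (0:ℝ), ∃ δ > (0:ℝ), ∃ L : ℝ, 0 ≤ L ∧
      Metric.closedBall xb R ⊆ Ω ∧ tb - δ ∈ T ∧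
      ∀ᵐ t ∂((deltaMeasure T).restrict (Ico (tb - δ) tb ∩ T)),
        ∀ x₁ ∈ Metric.closedBall xb R, ∀ x₂ ∈ Metric.closedBall xb R,
          ‖f x₁ t - f x₂ t‖ ≤ L * ‖x₁ - x₂‖

/-- Hypothesis (H^forw_stab): `G⁺(t) : x ↦ x + μ(t) f(x,t)` maps `Ω` into `Ω`. -/
def HforwStab {n : ℕ} (T : Set ℝ) (Ω : Set (EuclideanSpace ℝ (Fin n)))
    (f : EuclideanSpace ℝ (Fin n) → ℝ → EuclideanSpace ℝ (Fin n)) : Prop :=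
  ∀ t ∈ T, RightScattered T t → ∀ x ∈ Ω, x + tsGrain T t • f x t ∈ Ω

/-- Hypothesis (H^back_regr): `G⁺(t)` is a bijection from `Ω` onto `ℝⁿ`. -/
def HbackRegr {n : ℕ} (T : Set ℝ) (Ω : Set (EuclideanSpace ℝ (Fin n)))
    (f : EuclideanSpace ℝ (Fin n) → ℝ → EuclideanSpace ℝ (Fin n)) : Prop :=
  ∀ t ∈ T, RightScattered T t → Set.BijOn (fun x => x + tsGrain T t • f x t) Ω univ

/-- Hypothesis (H^back_stab): `G⁻(t) : x ↦ x - μ(t) f(x,t)` maps `Ω` into `Ω`. -/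
def HbackStab {n : ℕ} (T : Set ℝ) (Ω : Set (EuclideanSpace ℝ (Fin n)))
    (f : EuclideanSpace ℝ (Fin n) → ℝ → EuclideanSpace ℝ (Fin n)) : Prop :=
  ∀ t ∈ T, RightScattered T t → ∀ x ∈ Ω, x - tsGrain T t • f x t ∈ Ω

/-- Hypothesis (H^forw_regr): `G⁻(t)` is a bijection from `Ω` onto `ℝⁿ`. -/
def HforwRegr {n : ℕ} (T : Set ℝ) (Ω : Set (EuclideanSpace ℝ (Fin n)))
    (f : EuclideanSpace ℝ (Fin n) → ℝ → EuclideanSpace ℝ (Fin n)) : Prop :=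
  ∀ t ∈ T, RightScattered T t → Set.BijOn (fun x => x - tsGrain T t • f x t) Ω univ

/-- Hypothesis (H^glob_Lip): global Lipschitz continuity. -/
def HglobLip {n : ℕ} (T : Set ℝ) (Ω : Set (EuclideanSpace ℝ (Fin n)))
    (f : EuclideanSpace ℝ (Fin n) → ℝ → EuclideanSpace ℝ (Fin n)) : Prop :=
  ∃ L : ℝ, 0 ≤ L ∧
    ∀ᵐ t ∂((deltaMeasure T).restrict (tsUpDomain T)),
      ∀ x₁ ∈ Ω, ∀ x₂ ∈ Ω, ‖f x₁ t - f x₂ t‖ ≤ L * ‖x₁ - x₂‖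

/-- The relation `a ⊴ t₀ ⊴ b`. -/
def Trile (T : Set ℝ) (t₀ a b : ℝ) : Prop :=
  (IsLeast T t₀ ∧ a = t₀ ∧ t₀ < b) ∨
  (IsGreatest T t₀ ∧ a < t₀ ∧ t₀ = b) ∨
  (¬ IsLeast T t₀ ∧ ¬ IsGreatest T t₀ ∧ a < t₀ ∧ t₀ < b)

/-- `(q, [a,b]_𝕋)` is a solution of the non shifted Δ-Cauchy problem (Δ-CP). -/
def IsSolIcc {n : ℕ} (T : Set ℝ) (Ω : Set (EuclideanSpace ℝ (Fin n)))
    (f : EuclideanSpace ℝ (Fin n) → ℝ → EuclideanSpace ℝ (Fin n))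
    (t₀ : ℝ) (q₀ : EuclideanSpace ℝ (Fin n))
    (q : ℝ → EuclideanSpace ℝ (Fin n)) (a b : ℝ) : Prop :=
  (∀ t ∈ Icc a b ∩ T, q t ∈ Ω) ∧ DeltaAC T a b q ∧ q t₀ = q₀ ∧
    ∀ᵐ t ∂((deltaMeasure T).restrict (Ico a b ∩ T)),
      HasDeltaDerivAt T q (f (q t) t) t

/-- `(q, [a,b]_𝕋)` is a solution of the shifted Δ-Cauchy problem (Δ-CP^σ). -/
def IsSolIccS {n : ℕ} (T : Set ℝ) (Ω : Set (EuclideanSpace ℝ (Fin n)))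
    (f : EuclideanSpace ℝ (Fin n) → ℝ → EuclideanSpace ℝ (Fin n))
    (t₀ : ℝ) (q₀ : EuclideanSpace ℝ (Fin n))
    (q : ℝ → EuclideanSpace ℝ (Fin n)) (a b : ℝ) : Prop :=
  (∀ t ∈ Icc a b ∩ T, q t ∈ Ω) ∧ DeltaAC T a b q ∧ q t₀ = q₀ ∧
    ∀ᵐ t ∂((deltaMeasure T).restrict (Ico a b ∩ T)),
      HasDeltaDerivAt T q (f (q (tsSigma T t)) t) t

/-- `I_𝕋 ∈ 𝕀`: `I` is a real interval containing points `a, b` of `T` with `a ⊴ t₀ ⊴ b`. -/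
def MemI (T : Set ℝ) (t₀ : ℝ) (I : Set ℝ) : Prop :=
  I.OrdConnected ∧ ∃ a ∈ I ∩ T, ∃ b ∈ I ∩ T, Trile T t₀ a b

/-- `(q, I_𝕋)` is a solution of (Δ-CP). -/
def IsSol {n : ℕ} (T : Set ℝ) (Ω : Set (EuclideanSpace ℝ (Fin n)))
    (f : EuclideanSpace ℝ (Fin n) → ℝ → EuclideanSpace ℝ (Fin n))
    (t₀ : ℝ) (q₀ : EuclideanSpace ℝ (Fin n))
    (q : ℝ → EuclideanSpace ℝ (Fin n)) (I : Set ℝ) : Prop :=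
  MemI T t₀ I ∧ (∀ t ∈ I ∩ T, q t ∈ Ω) ∧
    ∀ a ∈ I ∩ T, ∀ b ∈ I ∩ T, Trile T t₀ a b → IsSolIcc T Ω f t₀ q₀ q a b

/-- `(q, I_𝕋)` is a solution of (Δ-CP^σ). -/
def IsSolS {n : ℕ} (T : Set ℝ) (Ω : Set (EuclideanSpace ℝ (Fin n)))
    (f : EuclideanSpace ℝ (Fin n) → ℝ → EuclideanSpace ℝ (Fin n))
    (t₀ : ℝ) (q₀ : EuclideanSpace ℝ (Fin n))
    (q : ℝ → EuclideanSpace ℝ (Fin n)) (I : Set ℝ) : Prop :=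
  MemI T t₀ I ∧ (∀ t ∈ I ∩ T, q t ∈ Ω) ∧
    ∀ a ∈ I ∩ T, ∀ b ∈ I ∩ T, Trile T t₀ a b → IsSolIccS T Ω f t₀ q₀ q a b

/-- `(q₁, I₁_𝕋)` is an extension of `(q, I_𝕋)`. -/
def SolExtends {n : ℕ} (T : Set ℝ) (q₁ : ℝ → EuclideanSpace ℝ (Fin n)) (I₁ : Set ℝ)
    (q : ℝ → EuclideanSpace ℝ (Fin n)) (I : Set ℝ) : Prop :=
  I ∩ T ⊆ I₁ ∩ T ∧ EqOn q₁ q (I ∩ T)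

/-- `(q, I_𝕋)` is a maximal solution of (Δ-CP). -/
def IsMaxSol {n : ℕ} (T : Set ℝ) (Ω : Set (EuclideanSpace ℝ (Fin n)))
    (f : EuclideanSpace ℝ (Fin n) → ℝ → EuclideanSpace ℝ (Fin n))
    (t₀ : ℝ) (q₀ : EuclideanSpace ℝ (Fin n))
    (q : ℝ → EuclideanSpace ℝ (Fin n)) (I : Set ℝ) : Prop :=
  IsSol T Ω f t₀ q₀ q I ∧
    ∀ q₁ I₁, IsSol T Ω f t₀ q₀ q₁ I₁ → SolExtends T q₁ I₁ q I → I₁ ∩ T = I ∩ T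

/-- `(q, I_𝕋)` is a maximal solution of (Δ-CP^σ). -/
def IsMaxSolS {n : ℕ} (T : Set ℝ) (Ω : Set (EuclideanSpace ℝ (Fin n)))
    (f : EuclideanSpace ℝ (Fin n) → ℝ → EuclideanSpace ℝ (Fin n))
    (t₀ : ℝ) (q₀ : EuclideanSpace ℝ (Fin n))
    (q : ℝ → EuclideanSpace ℝ (Fin n)) (I : Set ℝ) : Prop :=
  IsSolS T Ω f t₀ q₀ q I ∧
    ∀ q₁ I₁, IsSolS T Ω f t₀ q₀ q₁ I₁ → SolExtends T q₁ I₁ q I → I₁ ∩ T = I ∩ T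

/-! ### Time-scale combinatorics -/

lemma tsSigma_ge (T : Set ℝ) (t : ℝ) : t ≤ tsSigma T t := by
  unfold tsSigma
  split_ifs with h
  · exact le_csInf h (fun s hs => hs.2.le)
  · exact le_rfl

lemma tsSigma_le {T : Set ℝ} {t s : ℝ} (hs : s ∈ T) (hts : t < s) : tsSigma T t ≤ s := by
  unfold tsSigma
  rw [if_pos ⟨s, hs, hts⟩]
  exact csInf_le ⟨t, fun x hx => hx.2.le⟩ ⟨hs, hts⟩

lemma tsSigma_mem {T : Set ℝ} (hT : IsClosed T) {t : ℝ} (ht : t ∈ T) : tsSigma T t ∈ T := by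
  unfold tsSigma
  split_ifs with h
  · have h1 : sInf {s | s ∈ T ∧ t < s} ∈ closure {s | s ∈ T ∧ t < s} :=
      csInf_mem_closure h ⟨t, fun x hx => hx.2.le⟩
    exact hT.closure_subset_iff.2 (fun s hs => hs.1) h1
  · exact ht

lemma tsSigma_eq_of_not_scattered {T : Set ℝ} {t : ℝ} (h : ¬ RightScattered T t) :
    tsSigma T t = t :=
  le_antisymm (not_lt.1 h) (tsSigma_ge T t)

lemma exists_right_near {T : Set ℝ} {t b η : ℝ} (h : tsSigma T t = t) (hb : b ∈ T)
    (htb : t < b) (hη : 0 < η) : ∃ y ∈ T, t < y ∧ y ≤ b ∧ y < t + η := by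
  have hne : ({s | s ∈ T ∧ t < s}).Nonempty := ⟨b, hb, htb⟩
  unfold tsSigma at h
  rw [if_pos hne] at h
  obtain ⟨y, hy, hy2⟩ := exists_lt_of_csInf_lt hne (show sInf {s | s ∈ T ∧ t < s} < t + η by linarith)
  rcases le_total y b with hyb | hyb
  · exact ⟨y, hy.1, hy.2, hyb, hy2⟩
  · exact ⟨b, hb, htb, le_rfl, hyb.trans_lt hy2⟩

lemma countable_scattered (T : Set ℝ) : {t | t ∈ T ∧ RightScattered T t}.Countable := by
  refine (countable_setOfPred_isolated_right_within (s := T)).mono ?_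
  rintro t ⟨ht, hs⟩
  refine ⟨ht, ?_⟩
  rw [← empty_mem_iff_bot, mem_nhdsWithin]
  refine ⟨Iio (tsSigma T t), isOpen_Iio, hs, ?_⟩
  rintro s ⟨h1, h2, h3⟩
  exact absurd (tsSigma_le h2 h3) (not_le.2 h1)

/-- A property holds Δ-almost everywhere iff it holds Lebesgue-almost everywhere on `T` and at
every right-scattered point: the latter are the (countably many) atoms of the Δ-measure. -/
lemma ae_delta_iff {T S : Set ℝ} (hT : IsClosed T) (hS : MeasurableSet S) {P : ℝ → Prop} :
    (∀ᵐ t ∂((deltaMeasure T).restrict S), P t) ↔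
      (∀ᵐ t, t ∈ T → t ∈ S → P t) ∧ ∀ t ∈ T, RightScattered T t → t ∈ S → P t := by
  have : Countable {t : ℝ // t ∈ T ∧ RightScattered T t} := (countable_scattered T).to_subtype
  rw [ae_restrict_iff' hS, deltaMeasure, ae_add_measure_iff, ae_restrict_iff' hT.measurableSet,
    Measure.ae_sum_iff]
  refine and_congr Iff.rfl ?_
  constructor
  · intro h t ht hs
    have h1 := h ⟨t, ht, hs⟩
    have hc : ENNReal.ofReal (tsGrain T t) ≠ 0 := by
      have : 0 < tsGrain T t := sub_pos.2 hs
      simpa using this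
    rw [Measure.ae_ennreal_smul_measure_iff hc, ae_dirac_eq] at h1
    exact h1
  · rintro h ⟨t, ht, hs⟩
    have hc : ENNReal.ofReal (tsGrain T t) ≠ 0 := by
      have : 0 < tsGrain T t := sub_pos.2 hs
      simpa using this
    rw [Measure.ae_ennreal_smul_measure_iff hc, ae_dirac_eq]
    exact h t ht hs

/-! ### The mean value inequality for absolutely continuous functions -/

lemma sum_range_parity (a : ℕ → ℝ) (m : ℕ) :
    ∑ k ∈ Finset.range m, a k = ∑ k ∈ Finset.range ((m + 1) / 2), a (2 * k) +
      ∑ k ∈ Finset.range (m / 2), a (2 * k + 1) := by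
  induction m with
  | zero => simp
  | succ m ih =>
    rw [Finset.sum_range_succ, ih]
    rcases Nat.even_or_odd' m with ⟨j, rfl | rfl⟩
    · have h1 : (2 * j + 1) / 2 = j := by omega
      have h2 : (2 * j + 1 + 1) / 2 = j + 1 := by omega
      have h3 : (2 * j) / 2 = j := by omega
      rw [h1, h2, h3, Finset.sum_range_succ]
      ring
    · have h1 : (2 * j + 1) / 2 = j := by omega
      have h2 : (2 * j + 1 + 1) / 2 = j + 1 := by omega
      have h3 : (2 * j + 1 + 1 + 1) / 2 = j + 1 := by omega
      rw [h1, h2, h3, Finset.sum_range_succ (fun k => a (2 * k + 1)) j]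
      ring

/-- Finitely many non-overlapping intervals inside `V` have total length at most the measure
of `V`. -/
lemma sum_length_le {V : Set ℝ} {δ : ℝ} (hV : volume V < ENNReal.ofReal δ) (hδ : 0 < δ) (m : ℕ)
    (u v : ℕ → ℝ) (huv : ∀ k < m, u k ≤ v k) (hord : ∀ i j, i < j → j < m → v i ≤ u j)
    (hin : ∀ k < m, Icc (u k) (v k) ⊆ V) : ∑ k ∈ Finset.range m, (v k - u k) < δ := by
  have hd : (↑(Finset.range m) : Set ℕ).PairwiseDisjoint (fun k => Ioc (u k) (v k)) := by
    intro i hi j hj hij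
    simp only [Finset.coe_range, mem_Iio] at hi hj
    refine Set.disjoint_left.2 fun x hx hy => ?_
    rcases lt_or_gt_of_ne hij with h | h
    · have := hord i j h hj; linarith [hx.2, hy.1]
    · have := hord j i h hi; linarith [hx.1, hy.2]
  have h1 := measure_biUnion_finset (μ := volume) hd (fun k _ => measurableSet_Ioc)
  have h2 : volume (⋃ k ∈ Finset.range m, Ioc (u k) (v k)) ≤ volume V := by
    refine measure_mono (iUnion₂_subset fun k hk => ?_)
    exact Ioc_subset_Icc_self.trans (hin k (Finset.mem_range.1 hk))
  rw [h1] at h2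
  simp only [Real.volume_Ioc] at h2
  rw [← ENNReal.ofReal_sum_of_nonneg
    (fun k hk => sub_nonneg.2 (huv k (Finset.mem_range.1 hk)))] at h2
  exact (ENNReal.ofReal_lt_ofReal_iff hδ).1 (h2.trans_lt hV)

/-- Absolute continuity controls the variation of `q` along non-overlapping intervals inside a set
of small measure, up to a factor 2 because adjacent intervals may touch. -/
lemma sum_var_le {n : ℕ} {T : Set ℝ} {a b ε δ : ℝ} {q : ℝ → EuclideanSpace ℝ (Fin n)}
    (hδ : 0 < δ)
    (hAC : ∀ (m : ℕ) (u v : ℕ → ℝ),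
      (∀ k < m, u k ∈ Icc a b ∩ T) → (∀ k < m, v k ∈ Icc a b ∩ T) →
      (∀ k < m, u k ≤ v k) →
      (∀ i < m, ∀ j < m, i ≠ j → Disjoint (Icc (u i) (v i)) (Icc (u j) (v j))) →
      (∑ k ∈ Finset.range m, (v k - u k)) < δ →
      (∑ k ∈ Finset.range m, ‖q (v k) - q (u k)‖) < ε)
    {V : Set ℝ} (hV : volume V < ENNReal.ofReal δ) (m : ℕ) (u v : ℕ → ℝ)
    (hu : ∀ k < m, u k ∈ Icc a b ∩ T) (hv : ∀ k < m, v k ∈ Icc a b ∩ T)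
    (huv : ∀ k < m, u k < v k) (hord : ∀ i j, i < j → j < m → v i ≤ u j)
    (hin : ∀ k < m, Icc (u k) (v k) ⊆ V) :
    ∑ k ∈ Finset.range m, ‖q (v k) - q (u k)‖ ≤ 2 * ε := by
  -- Consecutive intervals may share an endpoint, so split them by the parity of the index.
  have key : ∀ (p : ℕ → ℕ) (m' : ℕ), (∀ k < m', p k < m) → (∀ i j, i < j → p i + 2 ≤ p j) →
      ∑ k ∈ Finset.range m', ‖q (v (p k)) - q (u (p k))‖ < ε := by
    intro p m' hp hgap
    have hlt : ∀ i j, i < j → j < m' → v (p i) < u (p j) := by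
      intro i j hij hj
      have h1 := hgap i j hij
      have h2 := hp j hj
      have h3 := hord (p i) (p i + 1) (by omega) (by omega)
      have h4 := huv (p i + 1) (by omega)
      have h5 := hord (p i + 1) (p j) (by omega) (by omega)
      linarith
    refine hAC m' (fun k => u (p k)) (fun k => v (p k)) (fun k hk => hu _ (hp k hk))
      (fun k hk => hv _ (hp k hk)) (fun k hk => (huv _ (hp k hk)).le) ?_ ?_
    · intro i hi j hj hij
      refine Set.disjoint_left.2 fun x hx hy => ?_
      rcases lt_or_gt_of_ne hij with h | h
      · have := hlt i j h hj; linarith [hx.2, hy.1]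
      · have := hlt j i h hi; linarith [hx.1, hy.2]
    · exact sum_length_le hV hδ m' _ _ (fun k hk => (huv _ (hp k hk)).le)
        (fun i j hij hj => (hlt i j hij hj).le) (fun k hk => hin _ (hp k hk))
  rw [sum_range_parity]
  have h1 := key (fun k => 2 * k) ((m + 1) / 2) (fun k hk => by omega) (fun i j h => by omega)
  have h2 := key (fun k => 2 * k + 1) (m / 2) (fun k hk => by omega) (fun i j h => by omega)
  linarith

/-- `ReachBy T q V M a c` says that the increment of `q` from `a` to `c` is bounded by `M (c - a)`
plus the variation of `q` along finitely many non-overlapping intervals contained in `V`. -/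
def ReachBy {n : ℕ} (T : Set ℝ) (q : ℝ → EuclideanSpace ℝ (Fin n)) (V : Set ℝ)
    (M a c : ℝ) : Prop :=
  ∃ (m : ℕ) (u v : ℕ → ℝ), (∀ k < m, u k ∈ Icc a c ∩ T) ∧ (∀ k < m, v k ∈ Icc a c ∩ T) ∧
    (∀ k < m, u k < v k) ∧ (∀ i j, i < j → j < m → v i ≤ u j) ∧
    (∀ k < m, Icc (u k) (v k) ⊆ V) ∧
    ‖q c - q a‖ ≤ M * (c - a) + ∑ k ∈ Finset.range m, ‖q (v k) - q (u k)‖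

/-- An estimate up to `x` continues to `y` when `[x, y]` lies in the exceptional set `V` or when `q`
satisfies the Lipschitz estimate between `x` and `y`. -/
lemma ReachBy.step {n : ℕ} {T : Set ℝ} {q : ℝ → EuclideanSpace ℝ (Fin n)} {V : Set ℝ}
    {M a x y : ℝ} (hM : 0 ≤ M) (h : ReachBy T q V M a x) (hx : x ∈ T) (hy : y ∈ T) (hax : a ≤ x)
    (hxy : x ≤ y) (hs : Icc x y ⊆ V ∨ ‖q y - q x‖ ≤ M * (y - x)) : ReachBy T q V M a y := by
  rcases hxy.eq_or_lt with rfl | hlt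
  · exact h
  obtain ⟨m, u, v, hu, hv, huv, hord, hin, hb⟩ := h
  have htri : ‖q y - q a‖ ≤ ‖q y - q x‖ + ‖q x - q a‖ := norm_sub_le_norm_sub_add_norm_sub _ _ _
  rcases hs with hs | hs
  · have hm : ∀ k < m + 1, ¬ k < m → k = m := fun k h1 h2 => by omega
    refine ⟨m + 1, fun k => if k < m then u k else x, fun k => if k < m then v k else y,
      ?_, ?_, ?_, ?_, ?_, ?_⟩
    · intro k hk
      by_cases h : k < m
      · simp only [h, if_true]
        exact ⟨⟨(hu k h).1.1, (hu k h).1.2.trans hxy⟩, (hu k h).2⟩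
      · simp only [h, if_false]
        exact ⟨⟨hax, hxy⟩, hx⟩
    · intro k hk
      by_cases h : k < m
      · simp only [h, if_true]
        exact ⟨⟨(hv k h).1.1, (hv k h).1.2.trans hxy⟩, (hv k h).2⟩
      · simp only [h, if_false]
        exact ⟨⟨hax.trans hxy, le_rfl⟩, hy⟩
    · intro k hk
      by_cases h : k < m
      · simp only [h, if_true]
        exact huv k h
      · simp only [h, if_false]
        exact hlt
    · intro i j hij hj
      have hi : i < m := by omega
      by_cases h : j < m
      · simp only [h, hi, if_true]
        exact hord i j hij h
      · simp only [h, hi, if_true, if_false]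
        exact (hv i hi).1.2
    · intro k hk
      by_cases h : k < m
      · simp only [h, if_true]
        exact hin k h
      · simp only [h, if_false]
        exact hs
    · rw [Finset.sum_range_succ]
      have he : ∑ k ∈ Finset.range m, ‖q (if k < m then v k else y) -
          q (if k < m then u k else x)‖ = ∑ k ∈ Finset.range m, ‖q (v k) - q (u k)‖ := by
        refine Finset.sum_congr rfl fun k hk => ?_
        simp only [Finset.mem_range.1 hk, if_true]
      simp only [lt_irrefl, if_false]
      rw [he]
      nlinarith
  · refine ⟨m, u, v, fun k hk => ⟨⟨(hu k hk).1.1, (hu k hk).1.2.trans hxy⟩, (hu k hk).2⟩,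
      fun k hk => ⟨⟨(hv k hk).1.1, (hv k hk).1.2.trans hxy⟩, (hv k hk).2⟩, huv, hord, hin, ?_⟩
    nlinarith

/-- Mean value inequality on a time scale: an absolutely continuous function whose Δ-derivative
is Δ-a.e. bounded by `M` satisfies `‖q b - q a‖ ≤ M (b - a)`. -/
lemma mvt_delta {n : ℕ} {T : Set ℝ} (hT : IsClosed T) {q q' : ℝ → EuclideanSpace ℝ (Fin n)}
    {a b M : ℝ} (ha : a ∈ T) (hb : b ∈ T) (hab : a ≤ b) (hM : 0 ≤ M) (hAC : DeltaAC T a b q)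
    (hd : ∀ᵐ t ∂((deltaMeasure T).restrict (Ico a b ∩ T)),
      HasDeltaDerivAt T q (q' t) t ∧ ‖q' t‖ ≤ M) :
    ‖q b - q a‖ ≤ M * (b - a) := by
  have main : ∀ ε > 0, ‖q b - q a‖ ≤ (M + ε) * (b - a) + 2 * ε := by
    intro ε hε
    obtain ⟨δ, hδ, hδAC⟩ := hAC ε hε
    obtain ⟨hd1, hd2⟩ := (ae_delta_iff hT (measurableSet_Ico.inter hT.measurableSet)).1 hd
    -- `N` collects the points at which the derivative gives no two-sided estimate.
    set N : Set ℝ := {t | ¬ (t ∈ T → t ∈ Ico a b ∩ T →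
      HasDeltaDerivAt T q (q' t) t ∧ ‖q' t‖ ≤ M)} ∪ {t | t ∈ T ∧ RightScattered T t} ∪ {b}
      with hN
    have hN0 : volume N = 0 := by
      refine measure_union_null (measure_union_null ?_ ?_) ?_
      · exact hd1
      · exact (countable_scattered T).measure_zero _
      · simp
    obtain ⟨V, hNV, hVo, hVδ⟩ := Set.exists_isOpen_lt_of_lt N (ENNReal.ofReal δ)
      (by rw [hN0]; simpa using hδ)
    have hgood : ∀ t ∈ T, t ∈ Icc a b → t ∉ V → t < b ∧ tsSigma T t = t ∧
        ∃ η > 0, ∀ s ∈ T, |s - t| < η → ‖q t - q s‖ ≤ (M + ε) * |t - s| := by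
      intro t ht htab htV
      have htN : t ∉ N := fun h => htV (hNV h)
      have h1 : t ≠ b := fun h => htN (Or.inr h)
      have h2 : ¬ RightScattered T t := fun h => htN (Or.inl (Or.inr ⟨ht, h⟩))
      have h3 : HasDeltaDerivAt T q (q' t) t ∧ ‖q' t‖ ≤ M := by
        by_contra h
        exact htN (Or.inl (Or.inl fun h' =>
          h (h' ht ⟨⟨htab.1, lt_of_le_of_ne htab.2 h1⟩, ht⟩)))
      have h4 := tsSigma_eq_of_not_scattered h2
      refine ⟨lt_of_le_of_ne htab.2 h1, h4, ?_⟩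
      obtain ⟨U, hU, hUd⟩ := h3.1 ε hε
      obtain ⟨η, hη, hηU⟩ := Metric.mem_nhds_iff.1 hU
      refine ⟨η, hη, fun s hs hst => ?_⟩
      have h5 := hUd s ⟨hηU (by simpa [Real.dist_eq] using hst), hs⟩
      rw [h4] at h5
      have h6 : ‖(t - s) • q' t‖ ≤ |t - s| * M := by
        rw [norm_smul, Real.norm_eq_abs]
        exact mul_le_mul_of_nonneg_left h3.2 (abs_nonneg _)
      have h7 : ‖q t - q s‖ ≤ ‖q t - q s - (t - s) • q' t‖ + ‖(t - s) • q' t‖ := by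
        simpa using norm_add_le (q t - q s - (t - s) • q' t) ((t - s) • q' t)
      linarith
    have hMε : 0 ≤ M + ε := by linarith
    set S : Set ℝ := {c | c ∈ T ∧ c ∈ Icc a b ∧ ReachBy T q V (M + ε) a c} with hS
    have haS : a ∈ S := ⟨ha, ⟨le_rfl, hab⟩, 0, fun _ => 0, fun _ => 0, by simp, by simp, by simp,
      by simp, by simp, by simp⟩
    have hSb : BddAbove S := ⟨b, fun c hc => hc.2.1.2⟩
    set c := sSup S with hc
    have hcT : c ∈ T := hT.closure_subset_iff.2 (fun s hs => hs.1) (csSup_mem_closure ⟨a, haS⟩ hSb)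
    have hac : a ≤ c := le_csSup hSb haS
    have hcb : c ≤ b := csSup_le ⟨a, haS⟩ fun x hx => hx.2.1.2
    have hcS : c ∈ S := by
      have hleft : ∃ η > 0, ∀ x ∈ T, c - η < x → x ≤ c →
          (Icc x c ⊆ V ∨ ‖q c - q x‖ ≤ (M + ε) * (c - x)) := by
        by_cases hcV : c ∈ V
        · obtain ⟨η, hη, hηV⟩ := Metric.mem_nhds_iff.1 (hVo.mem_nhds hcV)
          refine ⟨η, hη, fun x _ h1 h2 => Or.inl fun z hz => hηV ?_⟩
          rw [Metric.mem_ball, Real.dist_eq, abs_lt]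
          constructor <;> linarith [hz.1, hz.2]
        · obtain ⟨-, -, η, hη, h⟩ := hgood c hcT ⟨hac, hcb⟩ hcV
          refine ⟨η, hη, fun x hx h1 h2 => Or.inr ?_⟩
          have := h x hx (by rw [abs_lt]; constructor <;> linarith)
          rwa [abs_of_nonneg (by linarith)] at this
      obtain ⟨η, hη, h⟩ := hleft
      obtain ⟨x, hx, hx2⟩ := exists_lt_of_lt_csSup ⟨a, haS⟩ (show c - η < sSup S by linarith)
      have hxc : x ≤ c := le_csSup hSb hx
      exact ⟨hcT, ⟨hac, hcb⟩, hx.2.2.step hMε hx.1 hcT hx.2.1.1 hxc (h x hx.1 hx2 hxc)⟩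
    have hcb' : c = b := by
      by_contra hne
      have hlt : c < b := lt_of_le_of_ne hcb hne
      have hright : ∃ y ∈ T, c < y ∧ y ≤ b ∧
          (Icc c y ⊆ V ∨ ‖q y - q c‖ ≤ (M + ε) * (y - c)) := by
        by_cases hsc : RightScattered T c
        · refine ⟨tsSigma T c, tsSigma_mem hT hcT, hsc, tsSigma_le hb hlt, Or.inr ?_⟩
          obtain ⟨h1, h2⟩ := hd2 c hcT hsc ⟨⟨hac, hlt⟩, hcT⟩
          obtain ⟨U, hU, hUd⟩ := h1 ε hε
          have h5 := hUd c ⟨mem_of_mem_nhds hU, hcT⟩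
          have hpos : 0 < tsSigma T c - c := sub_pos.2 hsc
          rw [abs_of_pos hpos] at h5
          have h6 : ‖(tsSigma T c - c) • q' c‖ ≤ (tsSigma T c - c) * M := by
            rw [norm_smul, Real.norm_eq_abs, abs_of_pos hpos]
            exact mul_le_mul_of_nonneg_left h2 hpos.le
          have h7 := norm_add_le (q (tsSigma T c) - q c - (tsSigma T c - c) • q' c)
            ((tsSigma T c - c) • q' c)
          rw [sub_add_cancel] at h7
          linarith
        · have hσ := tsSigma_eq_of_not_scattered hsc
          by_cases hcV : c ∈ V
          · obtain ⟨η, hη, hηV⟩ := Metric.mem_nhds_iff.1 (hVo.mem_nhds hcV)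
            obtain ⟨y, hy, hcy, hyb, hyη⟩ := exists_right_near hσ hb hlt hη
            refine ⟨y, hy, hcy, hyb, Or.inl fun z hz => hηV ?_⟩
            rw [Metric.mem_ball, Real.dist_eq, abs_lt]
            constructor <;> linarith [hz.1, hz.2]
          · obtain ⟨-, -, η, hη, h⟩ := hgood c hcT ⟨hac, hcb⟩ hcV
            obtain ⟨y, hy, hcy, hyb, hyη⟩ := exists_right_near hσ hb hlt hη
            refine ⟨y, hy, hcy, hyb, Or.inr ?_⟩
            have := h y hy (by rw [abs_lt]; constructor <;> linarith)
            rwa [abs_of_neg (by linarith), norm_sub_rev, neg_sub] at this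
      obtain ⟨y, hy, hcy, hyb, hs⟩ := hright
      have hyS : y ∈ S :=
        ⟨hy, ⟨hac.trans hcy.le, hyb⟩, hcS.2.2.step hMε hcT hy hac hcy.le hs⟩
      exact absurd (le_csSup hSb hyS) (not_le.2 hcy)
    rw [hcb'] at hcS
    obtain ⟨m, u, v, hu, hv, huv, hord, hin, hfin⟩ := hcS.2.2
    have := sum_var_le hδ hδAC hVδ m u v hu hv huv hord hin
    linarith
  refine le_of_forall_pos_le_add fun ε hε => ?_
  have hpos : 0 < (b - a) + 2 := by linarith
  have := main (ε / ((b - a) + 2)) (by positivity)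
  have he : ε / ((b - a) + 2) * ((b - a) + 2) = ε := div_mul_cancel₀ _ hpos.ne'
  nlinarith

/-! ### Δ-differentiability -/

lemma HasDeltaDerivAt.congr {n : ℕ} {T : Set ℝ} {q q₁ : ℝ → EuclideanSpace ℝ (Fin n)}
    {v : EuclideanSpace ℝ (Fin n)} {t : ℝ} (h : HasDeltaDerivAt T q v t) {W : Set ℝ}
    (hW : W ∈ nhds t) (hq : ∀ s ∈ W ∩ T, q₁ s = q s) (hσ : q₁ (tsSigma T t) = q (tsSigma T t)) :
    HasDeltaDerivAt T q₁ v t := by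
  intro ε hε
  obtain ⟨U, hU, h1⟩ := h ε hε
  refine ⟨U ∩ W, Filter.inter_mem hU hW, fun s hs => ?_⟩
  rw [hσ, hq s ⟨hs.1.2, hs.2⟩]
  exact h1 s ⟨hs.1.1, hs.2⟩

lemma hasDelta_of_hasDerivAt {n : ℕ} {T : Set ℝ} {q : ℝ → EuclideanSpace ℝ (Fin n)}
    {v : EuclideanSpace ℝ (Fin n)} {t : ℝ} (hσ : tsSigma T t = t) (h : HasDerivAt q v t) :
    HasDeltaDerivAt T q v t := by
  intro ε hε
  have h1 := (hasDerivAt_iff_isLittleO.1 h).def hε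
  refine ⟨_, h1, fun s hs => ?_⟩
  have h2 : ‖q s - q t - (s - t) • v‖ ≤ ε * ‖s - t‖ := hs.1
  rw [hσ, abs_sub_comm, ← Real.norm_eq_abs]
  refine le_trans (le_of_eq ?_) h2
  rw [← norm_neg]
  congr 1
  module

/-- At a right-scattered point a local Lipschitz bound and the jump relation
`q(σ(t)) = q(t) + μ(t) v` give the Δ-derivative `v`. -/
lemma hasDelta_of_scattered {n : ℕ} {T : Set ℝ} {q : ℝ → EuclideanSpace ℝ (Fin n)}
    {v : EuclideanSpace ℝ (Fin n)} {t C : ℝ} (hs : RightScattered T t) (hC : 0 ≤ C) {W : Set ℝ}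
    (hW : W ∈ nhds t) (hlip : ∀ s ∈ W ∩ T, ‖q t - q s‖ ≤ C * |t - s|)
    (hjump : q (tsSigma T t) = q t + tsGrain T t • v) : HasDeltaDerivAt T q v t := by
  intro ε hε
  have hμ : 0 < tsGrain T t := sub_pos.2 hs
  set μ := tsGrain T t with hμd
  have hμσ : tsSigma T t = t + μ := by rw [hμd, tsGrain]; ring
  have hD : 0 < C + ‖v‖ + 1 := by positivity
  set η := min (μ / 2) (ε * (μ / 2) / (C + ‖v‖ + 1)) with hη
  have hη0 : 0 < η := by positivity
  refine ⟨W ∩ Metric.ball t η, Filter.inter_mem hW (Metric.ball_mem_nhds _ hη0), ?_⟩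
  rintro s ⟨⟨hsW, hsb⟩, hsT⟩
  rw [Metric.mem_ball, Real.dist_eq, abs_sub_comm] at hsb
  have h1 := hlip s ⟨hsW, hsT⟩
  have h2 : q (tsSigma T t) - q s - (tsSigma T t - s) • v = (q t - q s) - (t - s) • v := by
    rw [hjump, hμσ]; module
  have h3 : ‖(q t - q s) - (t - s) • v‖ ≤ (C + ‖v‖ + 1) * |t - s| := by
    have := norm_sub_le (q t - q s) ((t - s) • v)
    rw [norm_smul, Real.norm_eq_abs] at this
    nlinarith [abs_nonneg (t - s)]
  have h4 : (C + ‖v‖ + 1) * |t - s| ≤ ε * (μ / 2) := by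
    have : |t - s| ≤ ε * (μ / 2) / (C + ‖v‖ + 1) := hsb.le.trans (min_le_right _ _)
    rw [le_div_iff₀ hD] at this
    linarith
  have h5 : μ / 2 ≤ |tsSigma T t - s| := by
    have h6 : |t - s| < μ / 2 := hsb.trans_le (min_le_left _ _)
    refine le_trans ?_ (le_abs_self _)
    rw [hμσ]
    linarith [(abs_lt.1 h6).1]
  rw [h2]
  exact h3.trans (h4.trans (mul_le_mul_of_nonneg_left h5 hε.le))

/-! ### Transfer from the time scale to the real line -/

/-- The largest point of `T` not exceeding `s`, for `s ≥ b`; the value at `s < b` is that at `b`,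
which makes the function monotone on the whole line when `b ∈ T`. Its push-forward of Lebesgue
measure is the Δ-measure. -/
def tsFloor (T : Set ℝ) (b s : ℝ) : ℝ := sSup (T ∩ Iic (max s b))

lemma tsFloor_bdd (T : Set ℝ) (b s : ℝ) : BddAbove (T ∩ Iic (max s b)) := ⟨_, fun _ h => h.2⟩

lemma tsFloor_mono {T : Set ℝ} {b : ℝ} (hb : b ∈ T) : Monotone (tsFloor T b) := by
  intro s t hst
  refine csSup_le_csSup (tsFloor_bdd T b t) ⟨b, hb, mem_Iic.2 (le_max_right _ _)⟩ ?_
  exact inter_subset_inter_right _ (Iic_subset_Iic.2 (max_le_max_right b hst))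

lemma tsFloor_mem {T : Set ℝ} (hT : IsClosed T) {b : ℝ} (hb : b ∈ T) (s : ℝ) :
    tsFloor T b s ∈ T ∩ Iic (max s b) :=
  (hT.inter isClosed_Iic).csSup_mem ⟨b, hb, mem_Iic.2 (le_max_right _ _)⟩ (tsFloor_bdd T b s)

lemma tsFloor_of_mem {T : Set ℝ} {b t : ℝ} (ht : t ∈ T) (hbt : b ≤ t) : tsFloor T b t = t := by
  refine le_antisymm (csSup_le ⟨t, ht, mem_Iic.2 (le_max_left _ _)⟩ fun x hx => ?_)
    (le_csSup (tsFloor_bdd T b t) ⟨ht, mem_Iic.2 (le_max_left _ _)⟩)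
  simpa [max_eq_left hbt] using hx.2

lemma tsFloor_of_gap {T : Set ℝ} {b t s : ℝ} (ht : t ∈ T) (hbt : b ≤ t) (hts : t ≤ s)
    (hs : s < tsSigma T t) : tsFloor T b s = t := by
  refine le_antisymm (csSup_le ⟨t, ht, mem_Iic.2 (hts.trans (le_max_left _ _))⟩ fun x hx => ?_)
    (le_csSup (tsFloor_bdd T b s) ⟨ht, mem_Iic.2 (hts.trans (le_max_left _ _))⟩)
  by_contra hlt
  have h1 := tsSigma_le hx.1 (not_le.1 hlt)
  have h2 : x ≤ s := by simpa [max_eq_left (hbt.trans hts)] using hx.2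
  linarith

/-- A Δ-almost everywhere property pulls back along `tsFloor` to a Lebesgue-almost everywhere one:
a gap of `T` is sent to its right-scattered left endpoint, where the property holds. -/
lemma ae_comp_tsFloor {T : Set ℝ} (hT : IsClosed T) {b d : ℝ} (hb : b ∈ T) (hd : d ∈ T) {P : ℝ → Prop}
    (h : ∀ᵐ t ∂((deltaMeasure T).restrict (Ico b d ∩ T)), P t) :
    ∀ᵐ s, s ∈ Icc b d → P (tsFloor T b s) := by
  obtain ⟨h1, h2⟩ := (ae_delta_iff hT (measurableSet_Ico.inter hT.measurableSet)).1 h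
  have h3 : ∀ᵐ s : ℝ, s ≠ d := by simp [ae_iff]
  filter_upwards [h1, h3] with s hs hsd hsI
  have hsd' : s < d := lt_of_le_of_ne hsI.2 hsd
  by_cases hsT : s ∈ T
  · rw [tsFloor_of_mem hsT hsI.1]
    exact hs hsT ⟨⟨hsI.1, hsd'⟩, hsT⟩
  · obtain ⟨hp, hp2⟩ := tsFloor_mem hT hb s
    rw [mem_Iic, max_eq_left hsI.1] at hp2
    have hbp : b ≤ tsFloor T b s := le_csSup (tsFloor_bdd T b s) ⟨hb, mem_Iic.2 (le_max_right _ _)⟩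
    have hlt : tsFloor T b s < s := lt_of_le_of_ne hp2 fun he => hsT (he ▸ hp)
    have hsc : RightScattered T (tsFloor T b s) := by
      by_contra hns
      obtain ⟨y, hy, hy1, -, hy2⟩ := exists_right_near (tsSigma_eq_of_not_scattered hns) hd
        (hlt.trans hsd') (sub_pos.2 hlt)
      have hys : y ≤ s := by linarith
      have h6 := le_csSup (tsFloor_bdd T b s) ⟨hy, mem_Iic.2 (hys.trans (le_max_left _ _))⟩
      exact absurd h6 (not_le.2 hy1)
    exact h2 _ hp hsc ⟨⟨hbp, hlt.trans hsd'⟩, hp⟩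

/-! ### Local existence at right-dense points -/

/-- A Carathéodory function composed with a measurable function is a.e. measurable. -/
lemma aemeasurable_comp_caratheodory {n : ℕ}
    {F : EuclideanSpace ℝ (Fin n) → ℝ → EuclideanSpace ℝ (Fin n)}
    {B : Set (EuclideanSpace ℝ (Fin n))} {μ : Measure ℝ}
    (hF : ∀ x ∈ B, AEMeasurable (F x) μ) (hc : ∀ᵐ s ∂μ, ContinuousOn (fun x => F x s) B)
    {φ : ℝ → EuclideanSpace ℝ (Fin n)} (hφ : Measurable φ) (hφB : ∀ s, φ s ∈ B) :
    AEMeasurable (fun s => F (φ s) s) μ := by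
  have h0 : φ 0 ∈ B := hφB 0
  set ψ := SimpleFunc.approxOn φ hφ B (φ 0) h0 with hψ
  have hψB : ∀ k s, ψ k s ∈ B := fun k s => SimpleFunc.approxOn_mem hφ h0 k s
  refine aemeasurable_of_tendsto_metrizable_ae atTop (f := fun k s => F (ψ k s) s) ?_ ?_
  · intro k
    have he : (fun s => F (ψ k s) s) =
        fun s => ∑ x ∈ (ψ k).range, indicator (ψ k ⁻¹' {x}) (F x) s := by
      funext s
      rw [Finset.sum_eq_single (ψ k s)]
      · rw [indicator_of_mem (by simp)]
      · intro x _ hx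
        rw [indicator_of_notMem]
        intro h
        exact hx (by simpa using h.symm)
      · intro h
        exact absurd (SimpleFunc.mem_range_self _ _) h
    rw [he]
    refine Finset.aemeasurable_fun_sum _ fun x hx => ?_
    obtain ⟨s, rfl⟩ := SimpleFunc.mem_range.1 hx
    exact (hF _ (hψB k s)).indicator ((ψ k).measurableSet_fiber _)
  · filter_upwards [hc] with s hs
    have h1 : Tendsto (fun k => ψ k s) atTop (nhds (φ s)) :=
      SimpleFunc.tendsto_approxOn hφ h0 (subset_closure (hφB s))
    have h2 : Tendsto (fun k => ψ k s) atTop (nhdsWithin (φ s) B) :=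
      tendsto_nhdsWithin_iff.2 ⟨h1, Eventually.of_forall fun k => hψB k s⟩
    exact (hs (φ s) (hφB s)).tendsto.comp h2

/-- Picard's theorem for the equation `Y(t) = xb + ∫_b^t F(Y(π(s)), s) ds` with a measurable
change of time `π` inside the unknown. -/
lemma picard_delay {n : ℕ} {F : EuclideanSpace ℝ (Fin n) → ℝ → EuclideanSpace ℝ (Fin n)}
    {π : ℝ → ℝ} {b d R M L : ℝ} {xb : EuclideanSpace ℝ (Fin n)} (hbd : b < d) (hR : 0 ≤ R)
    (hL : 0 ≤ L) (hM : 0 ≤ M) (hπ : Measurable π)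
    (hmeas : ∀ x ∈ Metric.closedBall xb R, AEMeasurable (F x) (volume.restrict (Icc b d)))
    (hbdd : ∀ᵐ s, s ∈ Icc b d → ∀ x ∈ Metric.closedBall xb R, ‖F x s‖ ≤ M)
    (hlip : ∀ᵐ s, s ∈ Icc b d → ∀ x₁ ∈ Metric.closedBall xb R, ∀ x₂ ∈ Metric.closedBall xb R,
      ‖F x₁ s - F x₂ s‖ ≤ L * ‖x₁ - x₂‖)
    (hMR : M * (d - b) ≤ R) (hLd : L * (d - b) ≤ 1 / 2) :
    ∃ Y : ℝ → EuclideanSpace ℝ (Fin n), (∀ t, Y t ∈ Metric.closedBall xb R) ∧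
      IntervalIntegrable (fun s => F (Y (π s)) s) volume b d ∧
      ∀ t ∈ Icc b d, Y t = xb + ∫ s in b..t, F (Y (π s)) s := by
  set B := Metric.closedBall xb R with hB
  have hcont : ∀ᵐ s ∂(volume.restrict (Icc b d)), ContinuousOn (fun x => F x s) B := by
    rw [ae_restrict_iff' measurableSet_Icc]
    filter_upwards [hlip] with s hs hsI
    refine (LipschitzOnWith.of_dist_le_mul (K := ⟨L, hL⟩) fun x hx y hy => ?_).continuousOn
    rw [dist_eq_norm, dist_eq_norm]
    exact hs hsI x hx y hy
  have hFint : ∀ φ : ℝ → EuclideanSpace ℝ (Fin n), Measurable φ → (∀ s, φ s ∈ B) →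
      IntegrableOn (fun s => F (φ s) s) (Icc b d) := by
    intro φ hφ hφB
    refine Integrable.of_bound
      (aemeasurable_comp_caratheodory hmeas hcont hφ hφB).aestronglyMeasurable M ?_
    rw [ae_restrict_iff' measurableSet_Icc]
    filter_upwards [hbdd] with s hs hsI
    exact hs hsI _ (hφB s)
  have hFint2 : ∀ φ : ℝ → EuclideanSpace ℝ (Fin n), Measurable φ → (∀ s, φ s ∈ B) →
      ∀ t ∈ Icc b d, IntervalIntegrable (fun s => F (φ s) s) volume b t := by
    intro φ hφ hφB t ht
    rw [intervalIntegrable_iff_integrableOn_Icc_of_le ht.1]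
    exact (hFint φ hφ hφB).mono_set (Icc_subset_Icc_right ht.2)
  let S : Set C(Icc b d, EuclideanSpace ℝ (Fin n)) :=
    Metric.closedBall (ContinuousMap.const _ xb) R
  have hSmem : ∀ y : C(Icc b d, EuclideanSpace ℝ (Fin n)), y ∈ S ↔ ∀ t, y t ∈ B := by
    intro y
    simp only [S, hB, Metric.mem_closedBall]
    rw [ContinuousMap.dist_le hR]
    rfl
  have hSc : IsClosed S := Metric.isClosed_closedBall
  let ext (y : C(Icc b d, EuclideanSpace ℝ (Fin n))) : ℝ → EuclideanSpace ℝ (Fin n) :=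
    IccExtend hbd.le y
  have hextc : ∀ y, Continuous (ext y) := fun y => y.continuous.Icc_extend'
  have hextm : ∀ y, Measurable fun s => ext y (π s) := fun y => (hextc y).measurable.comp hπ
  have hextB : ∀ y ∈ S, ∀ s, ext y s ∈ B := fun y hy s => (hSmem y).1 hy _
  have hΦ : ∀ y : S, ∃ z : S, ∀ t : Icc b d,
      z.1 t = xb + ∫ s in b..(t : ℝ), F (ext y.1 (π s)) s := by
    intro y
    have hI := hFint _ (hextm y.1) (fun s => hextB _ y.2 (π s))
    have hc : ContinuousOn (fun t => ∫ s in b..t, F (ext y.1 (π s)) s) (Icc b d) := by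
      revert hI
      generalize (fun s => F (ext y.1 (π s)) s) = g
      intro hI
      rw [← uIcc_of_le hbd.le] at hI ⊢
      exact intervalIntegral.continuousOn_primitive_interval hI
    let z : C(Icc b d, EuclideanSpace ℝ (Fin n)) :=
      ⟨fun t => xb + ∫ s in b..(t : ℝ), F (ext y.1 (π s)) s,
        continuous_const.add (continuousOn_iff_continuous_domRestrict.1 hc)⟩
    refine ⟨⟨z, (hSmem z).2 fun t => ?_⟩, fun t => rfl⟩
    rw [hB, mem_closedBall_iff_norm]
    have h1 : z t - xb = ∫ s in b..(t : ℝ), F (ext y.1 (π s)) s := by simp [z]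
    rw [h1]
    refine (intervalIntegral.norm_integral_le_of_norm_le_const_ae (C := M) ?_).trans ?_
    · filter_upwards [hbdd] with s hs hsI
      rw [uIoc_of_le t.2.1] at hsI
      exact hs ⟨hsI.1.le, hsI.2.trans t.2.2⟩ _ (hextB _ y.2 _)
    · rw [abs_of_nonneg (sub_nonneg.2 t.2.1)]
      nlinarith [t.2.2]
  choose Φ hΦ using hΦ
  have hcontr : ContractingWith (1 / 2 : NNReal) Φ := by
    refine ⟨by norm_num, LipschitzWith.of_dist_le_mul fun y z => ?_⟩
    have hc : ((1 / 2 : NNReal) : ℝ) = 1 / 2 := by norm_num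
    rw [hc, Subtype.dist_eq, Subtype.dist_eq, ContinuousMap.dist_le (by positivity)]
    intro t
    have ht : (t : ℝ) ∈ Icc b d := t.2
    rw [dist_eq_norm, hΦ, hΦ, add_sub_add_left_eq_sub, ← intervalIntegral.integral_sub
      (hFint2 _ (hextm y.1) (fun s => hextB _ y.2 (π s)) _ ht)
      (hFint2 _ (hextm z.1) (fun s => hextB _ z.2 (π s)) _ ht)]
    refine (intervalIntegral.norm_integral_le_of_norm_le_const_ae
      (C := L * dist y.1 z.1) ?_).trans ?_
    · filter_upwards [hlip] with s hs hsI
      rw [uIoc_of_le ht.1] at hsI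
      refine (hs ⟨hsI.1.le, hsI.2.trans ht.2⟩ _ (hextB _ y.2 _) _ (hextB _ z.2 _)).trans ?_
      refine mul_le_mul_of_nonneg_left ?_ hL
      rw [← dist_eq_norm]
      exact ContinuousMap.dist_apply_le_dist _
    · rw [abs_of_nonneg (sub_nonneg.2 ht.1)]
      have h1 : L * (t - b) ≤ 1 / 2 :=
        (mul_le_mul_of_nonneg_left (sub_le_sub_right ht.2 b) hL).trans hLd
      nlinarith [dist_nonneg (x := y.1) (y := z.1)]
  have : CompleteSpace S := hSc.completeSpace_coe
  have : Nonempty S := ⟨⟨_, Metric.mem_closedBall_self hR⟩⟩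
  have hfix : Φ (hcontr.fixedPoint Φ) = hcontr.fixedPoint Φ := hcontr.fixedPoint_isFixedPt
  set y := hcontr.fixedPoint Φ with hy
  refine ⟨ext y.1, hextB _ y.2, ?_, ?_⟩
  · exact hFint2 _ (hextm y.1) (fun s => hextB _ y.2 (π s)) d ⟨hbd.le, le_rfl⟩
  · intro t ht
    have h1 := hΦ y ⟨t, ht⟩
    rw [hfix] at h1
    rw [← h1]
    exact IccExtend_of_mem _ _ ht

/-- From a right-dense point `b` that is not the maximum of `T`, the equation has a Lipschitz solution
with values in `Ω` up to some `d > b` in `T`. -/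
lemma local_existence {n : ℕ} {T : Set ℝ} (hT : IsClosed T)
    {Ω : Set (EuclideanSpace ℝ (Fin n))}
    {f : EuclideanSpace ℝ (Fin n) → ℝ → EuclideanSpace ℝ (Fin n)} (hf : DeltaCaratheodory T Ω f)
    (hinf : HInfty T Ω f) (hrd : HrdLocLip T Ω f) {b c : ℝ} {xb : EuclideanSpace ℝ (Fin n)}
    (hb : b ∈ T) (hc : c ∈ T) (hbc : b < c) (hσ : tsSigma T b = b) (hxb : xb ∈ Ω) :
    ∃ d ∈ T, b < d ∧ ∃ (Y : ℝ → EuclideanSpace ℝ (Fin n)) (C : ℝ), 0 ≤ C ∧ Y b = xb ∧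
      (∀ s ∈ Icc b d ∩ T, ∀ t ∈ Icc b d ∩ T, s ≤ t → ‖Y t - Y s‖ ≤ C * (t - s)) ∧
      (∀ t ∈ Icc b d ∩ T, Y t ∈ Ω) ∧
      ∀ᵐ t ∂((deltaMeasure T).restrict (Ioo b d ∩ T)), HasDeltaDerivAt T Y (f (Y t) t) t := by
  obtain ⟨R, hR, δ, hδ, L, hL, hball, hbδ, hLip⟩ :=
    hrd xb hxb b hb (fun h => absurd (h.2 hc) (not_le.2 hbc)) hσ
  obtain ⟨M, hM, hMb⟩ := hinf _ hball (isCompact_closedBall xb R) b hb _ hbδ (by linarith)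
  set η := min (R / (M + 1)) (1 / (2 * (L + 1))) with hη
  have hη0 : 0 < η := by positivity
  obtain ⟨d, hd, hbd, hdδ, hdη⟩ := exists_right_near hσ hbδ (by linarith) hη0
  have hsub : Ico b d ∩ T ⊆ Ico b (b + δ) ∩ T :=
    inter_subset_inter_left _ (Ico_subset_Ico_right hdδ)
  have hdb : d - b ≤ η := by linarith
  have hMR : M * (d - b) ≤ R := by
    have : d - b ≤ R / (M + 1) := hdb.trans (min_le_left _ _)
    rw [le_div_iff₀ (by positivity)] at this
    nlinarith
  have hLd : L * (d - b) ≤ 1 / 2 := by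
    have : d - b ≤ 1 / (2 * (L + 1)) := hdb.trans (min_le_right _ _)
    rw [le_div_iff₀ (by positivity)] at this
    nlinarith
  set π := tsFloor T b with hπd
  have hπm : Measurable π := (tsFloor_mono hb).measurable
  have hbdd := ae_comp_tsFloor hT hb hd (ae_restrict_of_ae_restrict_of_subset hsub hMb)
  have hlip := ae_comp_tsFloor hT hb hd (ae_restrict_of_ae_restrict_of_subset hsub hLip)
  have hup : Ico b d ∩ T ⊆ tsUpDomain T := fun t ht =>
    ⟨ht.2, fun h => absurd (h.2 hd) (not_le.2 ht.1.2)⟩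
  have hmeas : ∀ x ∈ Metric.closedBall xb R,
      AEMeasurable (fun s => f x (π s)) (volume.restrict (Icc b d)) := by
    intro x hx
    have h1 := hf.1 x (hball hx)
    have h2 := ae_comp_tsFloor hT hb hd (ae_restrict_of_ae_restrict_of_subset hup h1.ae_eq_mk)
    refine ⟨fun s => h1.mk _ (π s), h1.measurable_mk.comp hπm, ?_⟩
    rw [EventuallyEq, ae_restrict_iff' measurableSet_Icc]
    exact h2
  obtain ⟨Y, hYB, hYint, hY⟩ := picard_delay (F := fun x s => f x (π s)) (π := π) hbd hR.le hL hM
    hπm hmeas hbdd hlip hMR hLd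
  set G : ℝ → EuclideanSpace ℝ (Fin n) := fun s => f (Y (π s)) (π s) with hG
  have hGint : ∀ s ∈ Icc b d, IntervalIntegrable G volume b s := fun s hs =>
    hYint.mono_set (by
      rw [uIcc_of_le hs.1, uIcc_of_le hbd.le]; exact Icc_subset_Icc_right hs.2)
  have hdiff : ∀ s ∈ Icc b d, ∀ t ∈ Icc b d, Y t - Y s = ∫ x in s..t, G x := by
    intro s hs t ht
    rw [hY t ht, hY s hs, add_sub_add_left_eq_sub]
    exact intervalIntegral.integral_interval_sub_left (hGint t ht) (hGint s hs)
  have hYlip : ∀ s ∈ Icc b d, ∀ t ∈ Icc b d, ‖Y t - Y s‖ ≤ M * |t - s| := by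
    intro s hs t ht
    rw [hdiff s hs t ht]
    refine intervalIntegral.norm_integral_le_of_norm_le_const_ae ?_
    filter_upwards [hbdd] with x hx hxI
    have h1 : x ∈ Icc b d := by
      have := uIoc_subset_uIcc hxI
      exact (ordConnected_Icc.uIcc_subset hs ht) this
    exact hx h1 _ (hYB _)
  refine ⟨d, hd, hbd, Y, M, hM, ?_, ?_, fun t _ => hball (hYB t), ?_⟩
  · rw [hY b ⟨le_rfl, hbd.le⟩, intervalIntegral.integral_same, add_zero]
  · intro s hs t ht hst
    have := hYlip s hs.1 t ht.1
    rwa [abs_of_nonneg (sub_nonneg.2 hst)] at this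
  · rw [ae_delta_iff hT (measurableSet_Ioo.inter hT.measurableSet)]
    constructor
    · have hcount : ∀ᵐ t : ℝ, t ∉ {t | t ∈ T ∧ RightScattered T t} :=
        (countable_scattered T).ae_notMem _
      filter_upwards [hYint.ae_hasDerivAt_integral, hcount] with t ht hts htT htI
      have hσt := tsSigma_eq_of_not_scattered fun h => hts ⟨htT, h⟩
      have hI : t ∈ uIcc b d := by
        rw [uIcc_of_le hbd.le]; exact Ioo_subset_Icc_self htI.1
      have h1 := (ht hI b left_mem_uIcc).const_add xb
      have hπt : π t = t := tsFloor_of_mem htT htI.1.1.le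
      have hGt : G t = f (Y t) t := by simp only [hG, hπt]
      rw [hGt] at h1
      refine (hasDelta_of_hasDerivAt hσt h1).congr (Ioo_mem_nhds htI.1.1 htI.1.2) ?_ ?_
      · intro s hs
        exact hY s (Ioo_subset_Icc_self hs.1)
      · rw [hσt]
        exact hY t (Ioo_subset_Icc_self htI.1)
    · intro t htT hts htI
      have htI' : t ∈ Icc b d := Ioo_subset_Icc_self htI.1
      have hσd : tsSigma T t ≤ d := tsSigma_le hd htI.1.2
      have hσI : tsSigma T t ∈ Icc b d := ⟨htI'.1.trans hts.le, hσd⟩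
      refine hasDelta_of_scattered hts hM (Ioo_mem_nhds htI.1.1 htI.1.2) ?_ ?_
      · intro s hs
        exact hYlip s (Ioo_subset_Icc_self hs.1) t htI'
      · have h1 : Y (tsSigma T t) - Y t = tsGrain T t • f (Y t) t := by
          rw [hdiff t htI' _ hσI, tsGrain, ← intervalIntegral.integral_const]
          refine intervalIntegral.integral_congr_ae ?_
          have h3 : ∀ᵐ s : ℝ, s ≠ tsSigma T t := by simp [ae_iff]
          filter_upwards [h3] with s hs hsI
          rw [uIoc_of_le hts.le] at hsI
          have : π s = t :=
            tsFloor_of_gap htT htI'.1 hsI.1.le (lt_of_le_of_ne hsI.2 hs)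
          simp only [hG, this]
        rw [← h1]
        abel

/-! ### Gluing and maximality -/

lemma lip_glue {n : ℕ} {T : Set ℝ} {q : ℝ → EuclideanSpace ℝ (Fin n)} {a b d C : ℝ} (hb : b ∈ T)
    (hab : a ≤ b) (hbd : b ≤ d)
    (h1 : ∀ s ∈ Icc a b ∩ T, ∀ t ∈ Icc a b ∩ T, s ≤ t → ‖q t - q s‖ ≤ C * (t - s))
    (h2 : ∀ s ∈ Icc b d ∩ T, ∀ t ∈ Icc b d ∩ T, s ≤ t → ‖q t - q s‖ ≤ C * (t - s)) :
    ∀ s ∈ Icc a d ∩ T, ∀ t ∈ Icc a d ∩ T, s ≤ t → ‖q t - q s‖ ≤ C * (t - s) := by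
  intro s hs t ht hst
  rcases le_total t b with htb | htb
  · exact h1 s ⟨⟨hs.1.1, hst.trans htb⟩, hs.2⟩ t ⟨⟨ht.1.1, htb⟩, ht.2⟩ hst
  rcases le_total s b with hsb | hsb
  · have h3 := h1 s ⟨⟨hs.1.1, hsb⟩, hs.2⟩ b ⟨⟨hab, le_rfl⟩, hb⟩ hsb
    have h4 := h2 b ⟨⟨le_rfl, hbd⟩, hb⟩ t ⟨⟨htb, ht.1.2⟩, ht.2⟩ htb
    have h5 := norm_sub_le_norm_sub_add_norm_sub (q t) (q b) (q s)
    linarith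
  · exact h2 s ⟨⟨hsb, hs.1.2⟩, hs.2⟩ t ⟨⟨htb, ht.1.2⟩, ht.2⟩ hst

lemma deltaAC_of_lip {n : ℕ} {T : Set ℝ} {q : ℝ → EuclideanSpace ℝ (Fin n)} {a b C : ℝ}
    (hC : 0 ≤ C)
    (h : ∀ s ∈ Icc a b ∩ T, ∀ t ∈ Icc a b ∩ T, s ≤ t → ‖q t - q s‖ ≤ C * (t - s)) :
    DeltaAC T a b q := by
  intro ε hε
  refine ⟨ε / (C + 1), by positivity, fun m u v hu hv huv _ hsum => ?_⟩
  have h1 : ∑ k ∈ Finset.range m, ‖q (v k) - q (u k)‖ ≤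
      ∑ k ∈ Finset.range m, C * (v k - u k) := by
    refine Finset.sum_le_sum fun k hk => ?_
    have hk := Finset.mem_range.1 hk
    exact h _ (hu k hk) _ (hv k hk) (huv k hk)
  rw [← Finset.mul_sum] at h1
  have h2 : 0 ≤ ∑ k ∈ Finset.range m, (v k - u k) :=
    Finset.sum_nonneg fun k hk => sub_nonneg.2 (huv k (Finset.mem_range.1 hk))
  rw [lt_div_iff₀ (by positivity)] at hsum
  nlinarith

lemma DeltaAC.mono {n : ℕ} {T : Set ℝ} {q : ℝ → EuclideanSpace ℝ (Fin n)} {a b a' b' : ℝ}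
    (h : DeltaAC T a b q) (ha : a ≤ a') (hb : b' ≤ b) : DeltaAC T a' b' q := by
  intro ε hε
  obtain ⟨δ, hδ, h1⟩ := h ε hε
  have hs : Icc a' b' ∩ T ⊆ Icc a b ∩ T := inter_subset_inter_left _ (Icc_subset_Icc ha hb)
  exact ⟨δ, hδ, fun m u v hu hv => h1 m u v (fun k hk => hs (hu k hk)) fun k hk => hs (hv k hk)⟩

lemma trile_of_least {T : Set ℝ} {t₀ a b : ℝ} (hmin : IsLeast T t₀) (ha : a ∈ T)
    (h : Trile T t₀ a b) : a = t₀ ∧ t₀ < b := by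
  rcases h with h | h | h
  · exact h.2
  · exact absurd (hmin.2 ha) (not_le.2 h.2.1)
  · exact absurd hmin h.1

/-- A maximal solution has no Lipschitz extension solving the equation up to a point outside its
interval. -/
lemma no_extension {n : ℕ} {T : Set ℝ} {Ω : Set (EuclideanSpace ℝ (Fin n))}
    {f : EuclideanSpace ℝ (Fin n) → ℝ → EuclideanSpace ℝ (Fin n)} {t₀ : ℝ}
    {q₀ : EuclideanSpace ℝ (Fin n)} (hmin : IsLeast T t₀)
    {q : ℝ → EuclideanSpace ℝ (Fin n)} {I : Set ℝ} (hq : IsMaxSol T Ω f t₀ q₀ q I)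
    (ht₀I : t₀ ∈ I) (hq₀ : q t₀ = q₀) {d C : ℝ} (hd : d ∈ T) (hdI : d ∉ I)
    {q₁ : ℝ → EuclideanSpace ℝ (Fin n)} (hC : 0 ≤ C) (hEq : ∀ t ∈ I ∩ T, q₁ t = q t)
    (hΩ : ∀ t ∈ Icc t₀ d ∩ T, q₁ t ∈ Ω)
    (hLip : ∀ s ∈ Icc t₀ d ∩ T, ∀ t ∈ Icc t₀ d ∩ T, s ≤ t → ‖q₁ t - q₁ s‖ ≤ C * (t - s))
    (hder : ∀ᵐ t ∂((deltaMeasure T).restrict (Ico t₀ d ∩ T)),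
      HasDeltaDerivAt T q₁ (f (q₁ t) t) t) : False := by
  have ht₀d : t₀ < d := lt_of_le_of_ne (hmin.2 hd) fun h => hdI (h ▸ ht₀I)
  have hsol : IsSol T Ω f t₀ q₀ q₁ (Icc t₀ d) := by
    refine ⟨⟨ordConnected_Icc, t₀, ⟨⟨le_rfl, ht₀d.le⟩, hmin.1⟩, d, ⟨⟨ht₀d.le, le_rfl⟩, hd⟩,
      Or.inl ⟨hmin, rfl, ht₀d⟩⟩, hΩ, ?_⟩
    intro a ha b hb hab
    obtain ⟨rfl, hlt⟩ := trile_of_least hmin ha.2 hab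
    refine ⟨fun t ht => hΩ t ⟨⟨ht.1.1, ht.1.2.trans hb.1.2⟩, ht.2⟩,
      (deltaAC_of_lip hC hLip).mono le_rfl hb.1.2, ?_, ?_⟩
    · rw [hEq a ⟨ht₀I, hmin.1⟩, hq₀]
    · exact ae_restrict_of_ae_restrict_of_subset
        (inter_subset_inter_left _ (Ico_subset_Ico_right hb.1.2)) hder
  have hext : SolExtends T q₁ (Icc t₀ d) q I := by
    refine ⟨fun t ht => ⟨⟨hmin.2 ht.2, ?_⟩, ht.2⟩, fun t ht => hEq t ht⟩
    by_contra hcon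
    exact hdI (hq.1.1.1.out ht₀I ht.1 ⟨ht₀d.le, (not_le.1 hcon).le⟩)
  have heq := hq.2 q₁ _ hsol hext
  have : d ∈ I ∩ T := heq ▸ ⟨⟨ht₀d.le, le_rfl⟩, hd⟩
  exact hdI this.1

/-! ### The main argument -/

theorem stmt14 {n : ℕ}
    (T : Set ℝ) (hTclosed : IsClosed T) (hTnontriv : T.Nontrivial)
    (Ω : Set (EuclideanSpace ℝ (Fin n))) (hΩopen : IsOpen Ω) (hΩne : Ω.Nonempty)
    (f : EuclideanSpace ℝ (Fin n) → ℝ → EuclideanSpace ℝ (Fin n)) (hf : DeltaCaratheodory T Ω f)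
    (t₀ : ℝ) (ht₀ : t₀ ∈ T) (q₀ : EuclideanSpace ℝ (Fin n)) (hq₀ : q₀ ∈ Ω)
    (hmin : IsLeast T t₀)
    (hinf : HInfty T Ω f) (hrd : HrdLocLip T Ω f) (hstab : HforwStab T Ω f)
    (q : ℝ → EuclideanSpace ℝ (Fin n)) (I : Set ℝ) (hq : IsMaxSol T Ω f t₀ q₀ q I)
    (hng : I ∩ T ≠ T) :
    ∀ K ⊆ Ω, IsCompact K → ∃ t ∈ I ∩ T, q t ∈ Ω \ K := by
  intro K hKΩ hK
  by_contra hcon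
  push Not at hcon
  obtain ⟨hsol, -⟩ := id hq
  obtain ⟨⟨hIord, a₀, ha₀, b₀, hb₀, hab₀⟩, hqΩ, hqsol⟩ := hsol
  have hqK : ∀ t ∈ I ∩ T, q t ∈ K := by
    intro t ht
    by_contra h
    exact hcon t ht ⟨hqΩ t ht, h⟩
  obtain ⟨rfl, -⟩ := trile_of_least hmin ha₀.2 hab₀
  have ht₀I := ha₀.1
  have hicc : ∀ b ∈ I ∩ T, a₀ < b → IsSolIcc T Ω f a₀ q₀ q a₀ b := fun b hb h =>
    hqsol a₀ ha₀ b hb (Or.inl ⟨hmin, rfl, h⟩)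
  have hq00 : q a₀ = q₀ := (hqsol a₀ ha₀ b₀ hb₀ hab₀).2.2.1
  obtain ⟨c, hcT, hcI⟩ : ∃ c ∈ T, c ∉ I := by
    by_contra h
    push Not at h
    exact hng (inter_eq_right.2 h)
  have hltc : ∀ t ∈ I ∩ T, t < c := by
    intro t ht
    by_contra h
    exact hcI (hIord.out ht₀I ht.1 ⟨hmin.2 hcT, not_lt.1 h⟩)
  obtain ⟨M, hM, hMb⟩ := hinf K hKΩ hK a₀ ht₀ c hcT (hltc a₀ ha₀)
  have hlip : ∀ s ∈ I ∩ T, ∀ t ∈ I ∩ T, s ≤ t → ‖q t - q s‖ ≤ M * (t - s) := by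
    intro s hs t ht hst
    rcases hst.eq_or_lt with rfl | hlt
    · simp
    have has : a₀ ≤ s := hmin.2 hs.2
    obtain ⟨-, hAC, -, hder⟩ := hicc t ht (has.trans_lt hlt)
    refine mvt_delta hTclosed hs.2 ht.2 hst hM (hAC.mono has le_rfl) (q' := fun x => f (q x) x) ?_
    have h1 := ae_restrict_of_ae_restrict_of_subset
      (inter_subset_inter_left T (Ico_subset_Ico_left has)) hder
    have h2 := ae_restrict_of_ae_restrict_of_subset
      (inter_subset_inter_left T (Ico_subset_Ico has (hltc t ht).le)) hMb
    have h3 := ae_restrict_mem (μ := deltaMeasure T)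
      ((measurableSet_Ico (a := s) (b := t)).inter hTclosed.measurableSet)
    filter_upwards [h1, h2, h3] with x hx1 hx2 hx3
    exact ⟨hx1, hx2 _ (hqK x ⟨hIord.out hs.1 ht.1 (Ico_subset_Icc_self hx3.1), hx3.2⟩)⟩
  have hne : (I ∩ T).Nonempty := ⟨a₀, ha₀⟩
  have hbdd : BddAbove (I ∩ T) := ⟨c, fun t ht => (hltc t ht).le⟩
  set b := sSup (I ∩ T) with hb
  have hle : ∀ t ∈ I ∩ T, t ≤ b := fun t ht => le_csSup hbdd ht
  have hbT : b ∈ T := hTclosed.closure_subset_iff.2 inter_subset_right (csSup_mem_closure hne hbdd)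
  have hIb : ∀ t ∈ T, t < b → t ∈ I := by
    intro t ht htb
    obtain ⟨u, hu, htu⟩ := exists_lt_of_lt_csSup hne htb
    exact hIord.out ht₀I hu.1 ⟨hmin.2 ht, htu.le⟩
  obtain ⟨u, -, hub, huI⟩ := exists_seq_tendsto_sSup hne hbdd
  have hD : ∀ᵐ t ∂((deltaMeasure T).restrict (Ico a₀ b ∩ T)),
      HasDeltaDerivAt T q (f (q t) t) t := by
    have hcov : Ico a₀ b ∩ T ⊆ ⋃ k, Ico a₀ (u k) ∩ T := by
      intro t ht
      obtain ⟨k, hk⟩ := (hub.eventually (lt_mem_nhds ht.1.2)).exists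
      exact mem_iUnion.2 ⟨k, ⟨ht.1.1, hk⟩, ht.2⟩
    refine ae_restrict_of_ae_restrict_of_subset hcov ?_
    rw [ae_restrict_iUnion_iff]
    intro k
    by_cases hk : a₀ < u k
    · exact (hicc _ (huI k) hk).2.2.2
    · rw [Ico_eq_empty hk]
      simp
  -- If `b ∉ I`, the limit of `q` at `b` exists in `K` and extends the solution to `b`.
  have hbI : b ∈ I := by
    by_contra hbI
    have hlt : ∀ t ∈ I ∩ T, t < b := fun t ht =>
      lt_of_le_of_ne (hle t ht) fun h => hbI (h ▸ ht.1)
    obtain ⟨x, hxK, φ, hφ, hφx⟩ := hK.tendsto_subseq fun k => hqK _ (huI k)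
    have hx : ∀ t ∈ I ∩ T, ‖x - q t‖ ≤ M * (b - t) := by
      intro t ht
      have h1 : Tendsto (fun k => ‖q (u (φ k)) - q t‖) atTop (nhds ‖x - q t‖) :=
        (hφx.sub_const (q t)).norm
      have h2 : Tendsto (fun k => M * (u (φ k) - t)) atTop (nhds (M * (b - t))) :=
        ((hub.comp hφ.tendsto_atTop).sub_const t).const_mul M
      refine le_of_tendsto_of_tendsto h1 h2 ?_
      filter_upwards [(hub.comp hφ.tendsto_atTop).eventually (lt_mem_nhds (hlt t ht))] with k hk
      exact hlip t ht _ (huI _) hk.le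
    have hne' : ∀ t, t ≠ b → Function.update q b x t = q t := fun t ht =>
      Function.update_of_ne ht _ _
    refine no_extension hmin hq ht₀I hq00 hbT hbI (q₁ := Function.update q b x) hM ?_ ?_ ?_ ?_
    · exact fun t ht => hne' t (hlt t ht).ne
    · intro t ht
      rcases ht.1.2.eq_or_lt with rfl | h
      · rw [Function.update_self]
        exact hKΩ hxK
      · rw [hne' t h.ne]
        exact hqΩ t ⟨hIb t ht.2 h, ht.2⟩
    · intro s hs t ht hst
      rcases hst.eq_or_lt with rfl | hst'
      · simp
      have hsb := hst'.trans_le ht.1.2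
      have hsI : s ∈ I ∩ T := ⟨hIb s hs.2 hsb, hs.2⟩
      rw [hne' s hsb.ne]
      rcases ht.1.2.eq_or_lt with rfl | h
      · rw [Function.update_self]
        exact hx s hsI
      · rw [hne' t h.ne]
        exact hlip s hsI t ⟨hIb t ht.2 h, ht.2⟩ hst
    · have hmem := ae_restrict_mem (μ := deltaMeasure T)
        ((measurableSet_Ico (a := a₀) (b := b)).inter hTclosed.measurableSet)
      filter_upwards [hD, hmem] with t ht htI
      rw [hne' t htI.1.2.ne]
      obtain ⟨k, hk⟩ := (hub.eventually (lt_mem_nhds htI.1.2)).exists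
      refine ht.congr (Iio_mem_nhds htI.1.2) (fun s hs => hne' s (ne_of_lt hs.1)) (hne' _ ?_)
      exact ((tsSigma_le (huI k).2 hk).trans_lt (hlt _ (huI k))).ne
  have hbIT : b ∈ I ∩ T := ⟨hbI, hbT⟩
  have hbc : b < c := hltc b hbIT
  have hab : a₀ ≤ b := hmin.2 hbT
  have hIiff : ∀ t ∈ T, t ≤ b → t ∈ I ∩ T := fun t ht h =>
    ⟨hIord.out ht₀I hbI ⟨hmin.2 ht, h⟩, ht⟩
  -- Otherwise the equation can be solved to the right of `b`, by one step of the forward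
  -- dynamics or by local existence.
  obtain ⟨d, hd, hbd, Y, C, hC, hYb, hYlip, hYΩ, hYder, hYjump⟩ : ∃ d ∈ T, b < d ∧
      ∃ (Y : ℝ → EuclideanSpace ℝ (Fin n)) (C : ℝ), 0 ≤ C ∧ Y b = q b ∧
      (∀ s ∈ Icc b d ∩ T, ∀ t ∈ Icc b d ∩ T, s ≤ t → ‖Y t - Y s‖ ≤ C * (t - s)) ∧
      (∀ t ∈ Icc b d ∩ T, Y t ∈ Ω) ∧
      (∀ᵐ t ∂((deltaMeasure T).restrict (Ioo b d ∩ T)), HasDeltaDerivAt T Y (f (Y t) t) t) ∧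
      (RightScattered T b →
        tsSigma T b ≤ d ∧ Y (tsSigma T b) = q b + tsGrain T b • f (q b) b) := by
    by_cases hsc : RightScattered T b
    · refine ⟨tsSigma T b, tsSigma_mem hTclosed hbT, hsc, fun t => q b + (t - b) • f (q b) b,
        ‖f (q b) b‖, norm_nonneg _, by simp, ?_, ?_, ?_, fun _ => ⟨le_rfl, rfl⟩⟩
      · intro s hs t ht hst
        rw [add_sub_add_left_eq_sub, ← sub_smul, norm_smul, Real.norm_eq_abs,
          sub_sub_sub_cancel_right, abs_of_nonneg (sub_nonneg.2 hst), mul_comm]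
      · intro t ht
        rcases ht.1.1.eq_or_lt with rfl | h
        · simpa using hqΩ b hbIT
        · have : t = tsSigma T b := le_antisymm ht.1.2 (tsSigma_le ht.2 h)
          rw [this]
          exact hstab b hbT hsc _ (hqΩ b hbIT)
      · have : Ioo b (tsSigma T b) ∩ T = ∅ := by
          refine eq_empty_of_forall_notMem fun t ht => ?_
          exact absurd (tsSigma_le ht.2 ht.1.1) (not_le.2 ht.1.2)
        rw [this]
        simp
    · obtain ⟨d, hd, hbd, Y, C, hC, h1, h2, h3, h4⟩ := local_existence hTclosed hf hinf hrd hbT hcT hbc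
        (tsSigma_eq_of_not_scattered hsc) (hqΩ b hbIT)
      exact ⟨d, hd, hbd, Y, C, hC, h1, h2, h3, h4, fun h => absurd h hsc⟩
  have hdI : d ∉ I := fun h => absurd (hle d ⟨h, hd⟩) (not_le.2 hbd)
  set q₁ : ℝ → EuclideanSpace ℝ (Fin n) := fun t => if t ≤ b then q t else Y t with hq₁
  have hl : ∀ t, t ≤ b → q₁ t = q t := fun t ht => if_pos ht
  have hr : ∀ t, b ≤ t → q₁ t = Y t := by
    intro t ht
    rcases ht.eq_or_lt with rfl | h
    · rw [hl b le_rfl, hYb]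
    · exact if_neg (not_le.2 h)
  have hq₁lip : ∀ s ∈ Icc a₀ d ∩ T, ∀ t ∈ Icc a₀ d ∩ T, s ≤ t →
      ‖q₁ t - q₁ s‖ ≤ max M C * (t - s) := by
    refine lip_glue hbT hab hbd.le ?_ ?_
    · intro s hs t ht hst
      rw [hl s hs.1.2, hl t ht.1.2]
      exact (hlip s (hIiff s hs.2 hs.1.2) t (hIiff t ht.2 ht.1.2) hst).trans
        (mul_le_mul_of_nonneg_right (le_max_left _ _) (sub_nonneg.2 hst))
    · intro s hs t ht hst
      rw [hr s hs.1.1, hr t ht.1.1]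
      exact (hYlip s hs t ht hst).trans
        (mul_le_mul_of_nonneg_right (le_max_right _ _) (sub_nonneg.2 hst))
  refine no_extension hmin hq ht₀I hq00 hd hdI (q₁ := q₁) (hM.trans (le_max_left M C))
    (fun t ht => hl t (hle t ht)) ?_ hq₁lip ?_
  · intro t ht
    rcases le_total t b with h | h
    · rw [hl t h]
      exact hqΩ t (hIiff t ht.2 h)
    · rw [hr t h]
      exact hYΩ t ⟨⟨h, ht.1.2⟩, ht.2⟩
  have hleft : ∀ t, t < b → HasDeltaDerivAt T q (f (q t) t) t →
      HasDeltaDerivAt T q₁ (f (q₁ t) t) t := by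
    intro t ht h
    rw [hl t ht.le]
    exact h.congr (Iio_mem_nhds ht) (fun s hs => hl s (le_of_lt hs.1)) (hl _ (tsSigma_le hbT ht))
  have hright : ∀ t, b < t → HasDeltaDerivAt T Y (f (Y t) t) t →
      HasDeltaDerivAt T q₁ (f (q₁ t) t) t := by
    intro t ht h
    rw [hr t ht.le]
    exact h.congr (Ioi_mem_nhds ht) (fun s hs => hr s (le_of_lt hs.1))
      (hr _ (ht.le.trans (tsSigma_ge T t)))
  obtain ⟨hD1, hD2⟩ := (ae_delta_iff hTclosed (measurableSet_Ico.inter hTclosed.measurableSet)).1 hD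
  obtain ⟨hE1, hE2⟩ := (ae_delta_iff hTclosed (measurableSet_Ioo.inter hTclosed.measurableSet)).1 hYder
  rw [ae_delta_iff hTclosed (measurableSet_Ico.inter hTclosed.measurableSet)]
  constructor
  · have h3 : ∀ᵐ s : ℝ, s ≠ b := by simp [ae_iff]
    filter_upwards [hD1, hE1, h3] with t h1 h2 htb htT htI
    rcases lt_or_gt_of_ne htb with h | h
    · exact hleft t h (h1 htT ⟨⟨htI.1.1, h⟩, htT⟩)
    · exact hright t h (h2 htT ⟨⟨h, htI.1.2⟩, htT⟩)
  · intro t htT hts htI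
    rcases lt_trichotomy t b with h | rfl | h
    · exact hleft t h (hD2 t htT hts ⟨⟨htI.1.1, h⟩, htT⟩)
    · obtain ⟨hσd, hjump⟩ := hYjump hts
      refine hasDelta_of_scattered hts (hM.trans (le_max_left M C)) (Iio_mem_nhds hts) ?_ ?_
      · intro s hs
        -- Points of `T` left of `σ(b)` do not exceed `b`.
        have hsb : s ≤ b := by
          by_contra h
          exact absurd (tsSigma_le hs.2 (not_le.1 h)) (not_le.2 hs.1)
        rw [abs_of_nonneg (sub_nonneg.2 hsb)]
        exact hq₁lip s ⟨⟨hmin.2 hs.2, hsb.trans hbd.le⟩, hs.2⟩ b ⟨⟨hab, hbd.le⟩, hbT⟩ hsb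
      · rw [hr _ hts.le, hl b le_rfl]
        exact hjump
    · exact hright t h (hE2 t htT hts ⟨⟨h, htI.1.2⟩, htT⟩)

end
end

section
/- Let 𝕋 be a time scale admitting a minimum t₀ = min 𝕋. Then for every k ∈ ℕ and every t ∈ 𝕋, ∫_{[t₀,t)_𝕋} (τ − t₀)^k Δτ ≤ (t − t₀)^{k+1}/(k+1). -/
/-!
The Δ-measure consists of Lebesgue measure on `𝕋` together with an atom of mass `μ(r)` at each
right-scattered point `r`. That mass is the length of the gap `(r, σ(r))`, and since
`τ ↦ (τ - t₀) ^ k` is nondecreasing on `[t₀, t)`, the contribution of the atom is at most the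
Lebesgue integral over the gap. The gaps are pairwise disjoint, disjoint from `𝕋`, and, for
`r < t ∈ 𝕋`, contained in `[t₀, t)`; so the Δ-integral is bounded by the Lebesgue integral over
`[t₀, t)` (`lintegral_delta_le`), which equals `(t - t₀) ^ (k + 1) / (k + 1)`. Working with
`ℝ≥0∞`-valued integrals avoids having to show that the right-scattered points are countable.
-/

open MeasureTheory Set Filter Classical

noncomputable section
open scoped Classical

/-- The open gap `(r, σ(r))` of a time scale contains none of its points. -/
lemma gap_disjoint (T : Set ℝ) (r x : ℝ) (hx : x ∈ T) : x ∉ Ioo r (tsSigma T r) := by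
  rintro ⟨h1, h2⟩
  have hne : ({s | s ∈ T ∧ r < s}).Nonempty := ⟨x, hx, h1⟩
  rw [tsSigma, if_pos hne] at h2
  have hbdd : BddBelow {s | s ∈ T ∧ r < s} := ⟨r, fun s hs => hs.2.le⟩
  exact absurd (csInf_le hbdd ⟨hx, h1⟩) (not_le.mpr h2)

lemma tsSigma_le_s15 {T : Set ℝ} {r t : ℝ} (ht : t ∈ T) (hrt : r < t) : tsSigma T r ≤ t :=
  not_lt.mp fun h => gap_disjoint T r t ht ⟨hrt, h⟩

lemma gaps_pairwise_disjoint (T : Set ℝ) :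
    Pairwise (Function.onFun Disjoint
      fun r : {t : ℝ // t ∈ T ∧ RightScattered T t} => Ioo r.1 (tsSigma T r.1)) := by
  intro r s hrs
  refine Set.disjoint_left.mpr fun x hxr hxs => ?_
  rcases lt_or_gt_of_ne (fun h => hrs (Subtype.ext h) : r.1 ≠ s.1) with h | h
  · exact gap_disjoint T r.1 s.1 s.2.1 ⟨h, hxs.1.trans hxr.2⟩
  · exact gap_disjoint T s.1 r.1 r.2.1 ⟨h, hxr.1.trans hxs.2⟩

/-- For a function that is nondecreasing on `[a, t)`, the Δ-integral over `[a, t)_𝕋` is at most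
the Lebesgue integral over the real interval `[a, t)`: each atom `μ(r) g(r)` is dominated by the
integral of `g` over the gap `(r, σ(r))`. -/
lemma lintegral_delta_le {T : Set ℝ} (hT : IsClosed T) {a t : ℝ} (ht : t ∈ T)
    {g : ℝ → ENNReal} (hmono : MonotoneOn g (Ico a t)) :
    ∫⁻ τ in Ico a t ∩ T, g τ ∂(deltaMeasure T) ≤ ∫⁻ τ in Ico a t, g τ := by
  have hS : MeasurableSet (Ico a t ∩ T) := measurableSet_Ico.inter hT.measurableSet
  set ν : Measure ℝ := (volume.restrict (Ico a t)).withDensity g with hν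
  let G : {t : ℝ // t ∈ T ∧ RightScattered T t} → Set ℝ := fun r => Ioo r.1 (tsSigma T r.1)
  have hν_apply : ∀ A, MeasurableSet A → ν A = ∫⁻ τ in A ∩ Ico a t, g τ := fun A hA => by
    rw [hν, withDensity_apply _ hA, Measure.restrict_restrict hA]
  have hatom : ∀ r : {t : ℝ // t ∈ T ∧ RightScattered T t},
      ENNReal.ofReal (tsGrain T r.1) * (Ico a t ∩ T).indicator g r.1 ≤ ν (G r) := by
    intro r
    by_cases hr : r.1 ∈ Ico a t ∩ T
    · have hsub : G r ⊆ Ico a t := fun x hx =>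
        ⟨hr.1.1.trans hx.1.le, hx.2.trans_le (tsSigma_le_s15 ht hr.1.2)⟩
      rw [indicator_of_mem hr, hν_apply _ measurableSet_Ioo, inter_eq_left.mpr hsub, mul_comm,
        tsGrain, ← Real.volume_Ioo, ← setLIntegral_const]
      exact setLIntegral_mono' measurableSet_Ioo fun x hx => hmono hr.1 (hsub hx) hx.1.le
    · simp [indicator_of_notMem hr]
  have hsum : ∑' r, ν (G r) ≤ ν (⋃ r, G r) :=
    tsum_meas_le_meas_iUnion_of_disjoint ν (fun _ => measurableSet_Ioo)
      (gaps_pairwise_disjoint T)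
  have hdisj : Disjoint T (⋃ r, G r) := Set.disjoint_left.mpr fun x hx hxG => by
    obtain ⟨r, hr⟩ := mem_iUnion.mp hxG
    exact gap_disjoint T r.1 x hx hr
  have hUmeas : MeasurableSet (⋃ r, G r) := (isOpen_iUnion fun _ => isOpen_Ioo).measurableSet
  have hcont : ∫⁻ τ in T, (Ico a t ∩ T).indicator g τ = ν T := by
    rw [lintegral_indicator hS, Measure.restrict_restrict hS, hν_apply _ hT.measurableSet,
      inter_assoc, inter_self, inter_comm]
  calc ∫⁻ τ in Ico a t ∩ T, g τ ∂(deltaMeasure T)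
      = (∫⁻ τ in T, (Ico a t ∩ T).indicator g τ)
        + ∑' r : {t : ℝ // t ∈ T ∧ RightScattered T t},
            ENNReal.ofReal (tsGrain T r.1) * (Ico a t ∩ T).indicator g r.1 := by
        rw [← lintegral_indicator hS, deltaMeasure, lintegral_add_measure,
          lintegral_sum_measure]
        simp only [lintegral_smul_measure, lintegral_dirac, smul_eq_mul]
    _ ≤ ν T + ν (⋃ r, G r) := by
        rw [hcont]
        gcongr
        exact (ENNReal.tsum_le_tsum hatom).trans hsum
    _ = ν (T ∪ ⋃ r, G r) := (measure_union hdisj hUmeas).symm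
    _ ≤ ν univ := measure_mono (subset_univ _)
    _ = ∫⁻ τ in Ico a t, g τ := by rw [hν_apply _ MeasurableSet.univ, univ_inter]

theorem stmt15 (T : Set ℝ) (hTclosed : IsClosed T) (hTnontriv : T.Nontrivial)
    (t₀ : ℝ) (hmin : IsLeast T t₀) (k : ℕ) (t : ℝ) (ht : t ∈ T) :
    ∫ τ in Ico t₀ t ∩ T, (τ - t₀) ^ k ∂(deltaMeasure T) ≤ (t - t₀) ^ (k + 1) / (k + 1) := by
  have ht₀ : t₀ ≤ t := hmin.2 ht
  have hS : MeasurableSet (Ico t₀ t ∩ T) := measurableSet_Ico.inter hTclosed.measurableSet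
  have hcont : Continuous fun τ : ℝ => (τ - t₀) ^ k := by fun_prop
  have hmono : MonotoneOn (fun τ : ℝ => ENNReal.ofReal ((τ - t₀) ^ k)) (Ico t₀ t) := by
    intro x hx y _ hxy
    exact ENNReal.ofReal_le_ofReal
      (pow_le_pow_left₀ (sub_nonneg.mpr hx.1) (sub_le_sub_right hxy t₀) k)
  have hreal : ∫ τ in Ico t₀ t, (τ - t₀) ^ k = (t - t₀) ^ (k + 1) / (k + 1) := by
    rw [integral_Ico_eq_integral_Ioc, ← intervalIntegral.integral_of_le ht₀,
      intervalIntegral.integral_comp_sub_right (fun x => x ^ k) t₀, integral_pow]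
    simp
  have hint : IntegrableOn (fun τ : ℝ => (τ - t₀) ^ k) (Ico t₀ t) :=
    (hcont.integrableOn_Icc (a := t₀) (b := t)).mono_set Ico_subset_Icc_self
  rw [integral_eq_lintegral_of_nonneg_ae
    ((ae_restrict_iff' hS).mpr (ae_of_all _ fun τ hτ => pow_nonneg (sub_nonneg.mpr hτ.1.1) k))
    hcont.aestronglyMeasurable]
  refine ENNReal.toReal_le_of_le_ofReal
    (div_nonneg (pow_nonneg (sub_nonneg.mpr ht₀) _) (by positivity)) ?_
  refine (lintegral_delta_le hTclosed ht hmono).trans (le_of_eq ?_)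
  rw [← hreal, ofReal_integral_eq_lintegral_ofReal hint]
  exact (ae_restrict_iff' measurableSet_Ico).mpr
    (ae_of_all _ fun τ hτ => pow_nonneg (sub_nonneg.mpr hτ.1) k)

end
end
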